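/- arXiv:2005.03619 — 5 statements merged into one kernel-verified Lean document; each statement's English description precedes it below -/
import Mathlib

section
/- For every positive integer n, b(2n+1) = Σ_{k=−∞}^{∞} S(n − k(4k−3)), where the sum over all integers k (positive and negative) is finite since S vanishes on non-positive arguments. -/
/-!
The proof combines two formulas involving `Q(m) = Qd m` (partitions into distinct parts) and
`p(m) = pN m`; here `d(M)` denotes the number of divisors of `M`.

* Counting parts by their size `i` and removing copies of `i` one at a time gives
  `S(n) = ∑ d(M) p(n - M)` (`SN_eq`), and expresses the totals for odd and for distinct parts as
  sums over pairs `(i, j)` of `Q(n - i j)`, weighted by `[i odd]` and `(-1) ^ (j - 1)` respectively;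
  Euler's theorem makes `Q` appear in the odd case too. The difference of the two weights, summed
  over `i j = N`, is the number of even divisors of `N`. Hence
  `b(2n+1) = ∑ d(M) Q(2(n - M) + 1)` (`b_eq`).
* Gauss's identity `(q; q)_∞ (-q; q)_∞ ^ 2 = ∑ q ^ (j (j + 1) / 2)` (`X_pow_dvd_gauss`), together
  with `(q; q)_∞ (-q; q)_∞ = (q ^ 2; q ^ 2)_∞`, gives
  `∑ Q(m) q ^ m = (∑ q ^ (j (j + 1) / 2)) / (q ^ 2; q ^ 2)_∞`. Comparing coefficients at odd
  exponents yields `Q(2m+1) = ∑ p(m - k (4k - 3))` over all integers `k` (`Qd_odd`), because the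
  odd triangular numbers are exactly the numbers `2 k (4k - 3) + 1`.

Substituting the formula for `Q(2m+1)` in the one for `b(2n+1)` and exchanging the sums gives the
theorem.

Gauss's identity is derived from the finite `q`-binomial theorem and stated modulo `q ^ (n + 1)`, so
that it involves finite sums and products only; the infinite products for `∑ Q(m) q ^ m` and
`∑ p(m) q ^ m` are likewise truncated (`X_pow_dvd_hasProd_sub`).
-/

open Nat Finset

/-- Total number of parts (with multiplicity) in all partitions of `n` into odd parts. -/
def oddPartsTotal (n : ℕ) : ℕ :=
  ∑ p ∈ Nat.Partition.odds n, Multiset.card p.parts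

/-- Total number of parts (with multiplicity) in all partitions of `n` into distinct parts. -/
def distinctPartsTotal (n : ℕ) : ℕ :=
  ∑ p ∈ Nat.Partition.distincts n, Multiset.card p.parts

/-- `b n` : number of parts in odd partitions of `n` minus number of parts in distinct
partitions of `n`; zero for negative arguments. -/
def b (n : ℤ) : ℤ :=
  if 0 ≤ n then (oddPartsTotal n.toNat : ℤ) - (distinctPartsTotal n.toNat : ℤ) else 0

/-- `s n` : number of parts in partitions of `n` into an odd number of distinct parts minus
the number of parts in partitions of `n` into an even number of distinct parts. -/
def s (n : ℕ) : ℤ :=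
  ∑ p ∈ Nat.Partition.distincts n,
    (if Odd (Multiset.card p.parts) then (Multiset.card p.parts : ℤ)
     else -(Multiset.card p.parts : ℤ))

/-- Total number of parts in all partitions of `n`. -/
def SN (n : ℕ) : ℕ := ∑ p : Nat.Partition n, Multiset.card p.parts

/-- `S` extended to the integers: `0` unless the argument is a positive integer. -/
def S (n : ℤ) : ℤ := if 0 < n then (SN n.toNat : ℤ) else 0

/-- The partition function `p(n)`. -/
def pN (n : ℕ) : ℕ := Fintype.card (Nat.Partition n)

/-- The partition function extended by `0` on negative integers. -/
def pZ (n : ℤ) : ℤ := if 0 ≤ n then (pN n.toNat : ℤ) else 0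

/-- Number of partitions of `n` into distinct parts. -/
def Qd (n : ℕ) : ℕ := (Nat.Partition.distincts n).card

/-- `M k n` : number of partitions of `n` in which `k` is the least positive integer that is
not a part and there are more parts greater than `k` than parts smaller than `k`. -/
def M (k n : ℕ) : ℕ :=
  Finset.card (Finset.univ.filter (fun p : Nat.Partition n =>
    k ∉ p.parts ∧ (∀ j < k, 0 < j → j ∈ p.parts) ∧
      Multiset.card (p.parts.filter (fun x => x < k)) <
        Multiset.card (p.parts.filter (fun x => k < x))))

/-- `MP k n` : number of partitions of `n` whose largest part is greater than `2k-1`, is odd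
and appears exactly `k` times, while every other odd part appears at most once. -/
def MP (k n : ℕ) : ℕ :=
  Finset.card (Finset.univ.filter (fun p : Nat.Partition n =>
    2 * k - 1 < p.parts.sup ∧ Odd p.parts.sup ∧ p.parts.count p.parts.sup = k ∧
      ∀ x ∈ p.parts, x ≠ p.parts.sup → Odd x → p.parts.count x ≤ 1))

/-- `e n` : number of partitions of `n` in which every even part occurs an even number of
times (OEIS A006950). -/
def e (n : ℕ) : ℕ :=
  Finset.card (Finset.univ.filter (fun p : Nat.Partition n =>
    ∀ x ∈ p.parts, Even x → Even (p.parts.count x)))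
namespace GaussTriangular

open PowerSeries

/-! ### Gauss's triangular number identity -/

/-- The finite Euler product `(q; q)_n = (1 - q) ⋯ (1 - q ^ n)` as a power series over `ℚ`. -/
noncomputable def eulerProd (n : ℕ) : ℚ⟦X⟧ := ∏ i ∈ range n, (1 - X ^ (i + 1))

/-- The finite product `(-q; q)_n = (1 + q) ⋯ (1 + q ^ n)` as a power series over `ℚ`. -/
noncomputable def plusProd (n : ℕ) : ℚ⟦X⟧ := ∏ i ∈ range n, (1 + X ^ (i + 1))

lemma eulerProd_succ (n : ℕ) : eulerProd (n + 1) = eulerProd n * (1 - X ^ (n + 1)) :=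
  prod_range_succ _ _

lemma plusProd_succ (n : ℕ) : plusProd (n + 1) = plusProd n * (1 + X ^ (n + 1)) :=
  prod_range_succ _ _

lemma constantCoeff_eulerProd (n : ℕ) : constantCoeff (eulerProd n) = 1 := by
  simp [eulerProd, map_prod]

lemma eulerProd_mul_inv (n : ℕ) : eulerProd n * (eulerProd n)⁻¹ = 1 :=
  PowerSeries.mul_inv_cancel _ (by simp [constantCoeff_eulerProd])

lemma one_sub_mul_inv_eulerProd_succ (n : ℕ) :
    (1 - X ^ (n + 1)) * (eulerProd (n + 1))⁻¹ = (eulerProd n)⁻¹ := by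
  have h1 := eulerProd_mul_inv n
  have h2 := eulerProd_mul_inv (n + 1)
  rw [eulerProd_succ] at h2 ⊢
  linear_combination (eulerProd n)⁻¹ * h2 -
    (1 - X ^ (n + 1)) * (eulerProd n * (1 - X ^ (n + 1)))⁻¹ * h1

/-- The finite `q`-binomial theorem in homogeneous form; the Gaussian binomial coefficient is written
as `(q; q)_N / ((q; q)_k (q; q)_l)` with `k + l = N`. -/
lemma prod_add_mul_X_pow (y z : ℚ⟦X⟧) (N : ℕ) :
    ∏ i ∈ range N, (y + z * X ^ i) = eulerProd N * ∑ p ∈ antidiagonal N,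
      (z ^ p.1 * X ^ (p.1.choose 2) * (eulerProd p.1)⁻¹) * (y ^ p.2 * (eulerProd p.2)⁻¹) := by
  induction N with
  | zero =>
    simp [eulerProd]
  | succ N ih =>
    set a : ℕ → ℚ⟦X⟧ := fun k ↦ z ^ k * X ^ (k.choose 2) * (eulerProd k)⁻¹ with ha
    set c : ℕ → ℚ⟦X⟧ := fun l ↦ y ^ l * (eulerProd l)⁻¹ with hc
    have ha' (k : ℕ) : (1 - X ^ (k + 1)) * a (k + 1) = z * X ^ k * a k := by
      simp only [ha]
      rw [← one_sub_mul_inv_eulerProd_succ k, Nat.choose_succ_succ' k 1, Nat.choose_one_right]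
      ring
    have hc' (l : ℕ) : (1 - X ^ (l + 1)) * c (l + 1) = y * c l := by
      simp only [hc]
      rw [← one_sub_mul_inv_eulerProd_succ l]
      ring
    -- `1 - q ^ (k + l) = (1 - q ^ l) + q ^ l * (1 - q ^ k)` splits the sum; each part loses its
    -- boundary term and becomes a sum over the antidiagonal of `N`.
    have h1 : ∑ p ∈ antidiagonal (N + 1), (1 - X ^ p.2) * (a p.1 * c p.2) =
        y * ∑ p ∈ antidiagonal N, a p.1 * c p.2 := by
      rw [Finset.Nat.sum_antidiagonal_succ', mul_sum]
      simp only [pow_zero, sub_self, zero_mul, zero_add]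
      refine sum_congr rfl fun p _ ↦ ?_
      linear_combination a p.1 * hc' p.2
    have h2 : ∑ p ∈ antidiagonal (N + 1), X ^ p.2 * (1 - X ^ p.1) * (a p.1 * c p.2) =
        z * X ^ N * ∑ p ∈ antidiagonal N, a p.1 * c p.2 := by
      rw [Finset.Nat.sum_antidiagonal_succ, mul_sum]
      simp only [pow_zero, sub_self, zero_mul, zero_add, mul_zero]
      refine sum_congr rfl fun p hp ↦ ?_
      rw [← mem_antidiagonal.1 hp, pow_add]
      linear_combination X ^ p.2 * c p.2 * ha' p.1
    have h3 : (1 - X ^ (N + 1)) * ∑ p ∈ antidiagonal (N + 1), a p.1 * c p.2 =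
        (y + z * X ^ N) * ∑ p ∈ antidiagonal N, a p.1 * c p.2 := by
      rw [add_mul, ← h1, ← h2, ← sum_add_distrib, mul_sum]
      refine sum_congr rfl fun p hp ↦ ?_
      rw [← mem_antidiagonal.1 hp, pow_add]
      ring
    rw [prod_range_succ, ih, eulerProd_succ]
    linear_combination -eulerProd N * h3

lemma two_mul_choose_two (m : ℕ) : 2 * m.choose 2 + m = m * m := by
  induction m with
  | zero => rfl
  | succ m ih => rw [Nat.choose_succ_succ' m 1, Nat.choose_one_right]; linarith

lemma prod_X_pow_add (n : ℕ) :
    ∏ i ∈ range n, ((X : ℚ⟦X⟧) ^ n + 1 * X ^ i) = X ^ (n.choose 2) * plusProd n := by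
  have h : ∀ i ∈ range n, (X : ℚ⟦X⟧) ^ n + 1 * X ^ i = X ^ i * (1 + X ^ (n - 1 - i + 1)) := by
    intro i hi
    have hi := mem_range.1 hi
    rw [mul_add, ← pow_add, show i + (n - 1 - i + 1) = n by omega]
    ring
  rw [prod_congr rfl h, prod_mul_distrib, prod_pow_eq_pow_sum, sum_range_id, ← Nat.choose_two_right,
    prod_range_reflect (fun i ↦ 1 + (X : ℚ⟦X⟧) ^ (i + 1)), plusProd]

/-- Specialising the `q`-binomial theorem to `y = q ^ n`, `z = 1`, `N = 2 n + 1`: the two halves of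
the sum coincide, and so do the two halves of the product up to a factor `2`. -/
lemma plusProd_mul_plusProd (n : ℕ) :
    plusProd n * plusProd n = ∑ j ∈ range (n + 1), X ^ ((j + 1).choose 2) *
      (eulerProd (2 * n + 1) * (eulerProd (n - j))⁻¹ * (eulerProd (n + 1 + j))⁻¹) := by
  have h := prod_add_mul_X_pow (X ^ n) 1 (n + (n + 1))
  rw [prod_range_add, prod_X_pow_add] at h
  have hR : ∏ i ∈ range (n + 1), ((X : ℚ⟦X⟧) ^ n + 1 * X ^ (n + i)) =
      X ^ (n * (n + 1)) * (2 * plusProd n) := by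
    have : ∀ i ∈ range (n + 1), (X : ℚ⟦X⟧) ^ n + 1 * X ^ (n + i) = X ^ n * (1 + X ^ i) :=
      fun i _ ↦ by ring
    rw [prod_congr rfl this, prod_mul_distrib, prod_const, card_range, ← pow_mul,
      prod_range_succ', plusProd]
    ring
  rw [hR, Finset.Nat.sum_antidiagonal_eq_sum_range_succ_mk,
    show (n + (n + 1)).succ = (n + 1) + (n + 1) by omega, sum_range_add,
    ← sum_range_reflect _ (n + 1)] at h
  -- The summand with index `k = n - j` in the lower half.
  have e1 : ∀ j ∈ range (n + 1),
      (1 ^ (n + 1 - 1 - j) * (X : ℚ⟦X⟧) ^ ((n + 1 - 1 - j).choose 2) *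
        (eulerProd (n + 1 - 1 - j))⁻¹) * ((X ^ n) ^ (n + (n + 1) - (n + 1 - 1 - j)) *
        (eulerProd (n + (n + 1) - (n + 1 - 1 - j)))⁻¹) =
      X ^ (n.choose 2 + n * (n + 1)) * (X ^ ((j + 1).choose 2) *
        ((eulerProd (n - j))⁻¹ * (eulerProd (n + 1 + j))⁻¹)) := by
    intro j hj
    obtain ⟨i, rfl⟩ := Nat.exists_eq_add_of_le (Nat.lt_succ_iff.1 (mem_range.1 hj))
    rw [show j + i + 1 - 1 - j = i by omega, show j + i - j = i by omega,
      show j + i + (j + i + 1) - i = j + i + 1 + j by omega]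
    have : (j + i).choose 2 + (j + i) * (j + i + 1) + (j + 1).choose 2 =
        i.choose 2 + (j + i) * (j + i + 1 + j) := by
      have h1 := two_mul_choose_two (j + i)
      have h2 := two_mul_choose_two (j + 1)
      have h3 := two_mul_choose_two i
      nlinarith
    rw [← mul_assoc (X ^ _), ← pow_add, this, ← pow_mul, pow_add]
    ring
  -- The summand with index `k = n + 1 + j` in the upper half has the same value.
  have e2 : ∀ j ∈ range (n + 1),
      (1 ^ (n + 1 + j) * (X : ℚ⟦X⟧) ^ ((n + 1 + j).choose 2) *
        (eulerProd (n + 1 + j))⁻¹) * ((X ^ n) ^ (n + (n + 1) - (n + 1 + j)) *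
        (eulerProd (n + (n + 1) - (n + 1 + j)))⁻¹) =
      X ^ (n.choose 2 + n * (n + 1)) * (X ^ ((j + 1).choose 2) *
        ((eulerProd (n - j))⁻¹ * (eulerProd (n + 1 + j))⁻¹)) := by
    intro j hj
    obtain ⟨i, rfl⟩ := Nat.exists_eq_add_of_le (Nat.lt_succ_iff.1 (mem_range.1 hj))
    rw [show j + i - j = i by omega, show j + i + (j + i + 1) - (j + i + 1 + j) = i by omega]
    have : (j + i).choose 2 + (j + i) * (j + i + 1) + (j + 1).choose 2 =
        (j + i + 1 + j).choose 2 + (j + i) * i := by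
      have h1 := two_mul_choose_two (j + i)
      have h2 := two_mul_choose_two (j + 1)
      have h3 := two_mul_choose_two (j + i + 1 + j)
      nlinarith
    rw [← mul_assoc (X ^ _), ← pow_add, this, ← pow_mul, pow_add]
    ring
  rw [sum_congr rfl e1, sum_congr rfl e2, ← mul_sum] at h
  have h2 : (2 : ℚ⟦X⟧) ≠ 0 := fun h2 ↦ by
    have := congrArg constantCoeff h2
    rw [← one_add_one_eq_two, map_add, map_one, map_zero] at this
    norm_num at this
  have hX : (2 * X ^ (n.choose 2 + n * (n + 1)) : ℚ⟦X⟧) ≠ 0 :=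
    mul_ne_zero h2 (pow_ne_zero _ X_ne_zero)
  apply mul_left_cancel₀ hX
  have hs : ∑ j ∈ range (n + 1), (X : ℚ⟦X⟧) ^ ((j + 1).choose 2) *
      (eulerProd (2 * n + 1) * (eulerProd (n - j))⁻¹ * (eulerProd (n + 1 + j))⁻¹) =
      eulerProd (n + (n + 1)) * ∑ j ∈ range (n + 1), X ^ ((j + 1).choose 2) *
        ((eulerProd (n - j))⁻¹ * (eulerProd (n + 1 + j))⁻¹) := by
    rw [mul_sum]
    refine sum_congr rfl fun j _ ↦ ?_
    rw [show n + (n + 1) = 2 * n + 1 by ring]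
    ring
  rw [hs]
  linear_combination h

lemma X_pow_dvd_eulerProd_mul_inv_sub_one {k l : ℕ} (h : k ≤ l) :
    (X : ℚ⟦X⟧) ^ (k + 1) ∣ eulerProd l * (eulerProd k)⁻¹ - 1 := by
  induction l, h using Nat.le_induction with
  | base => simp [eulerProd_mul_inv]
  | succ l hl ih =>
    have : eulerProd (l + 1) * (eulerProd k)⁻¹ - 1 =
        (eulerProd l * (eulerProd k)⁻¹ - 1) - X ^ (l + 1) * (eulerProd l * (eulerProd k)⁻¹) := by
      rw [eulerProd_succ]; ring
    rw [this]
    exact dvd_sub ih (Dvd.dvd.mul_right (pow_dvd_pow _ (by omega)) _)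

/-- **Gauss's triangular number identity**
`(q; q)_∞ (-q; q)_∞ ^ 2 = ∑ q ^ (j (j + 1) / 2)`, truncated modulo `q ^ (n + 1)`. -/
lemma X_pow_dvd_gauss (n : ℕ) :
    (X : ℚ⟦X⟧) ^ (n + 1) ∣ plusProd n * plusProd n * eulerProd n -
      ∑ j ∈ range (n + 1), X ^ ((j + 1).choose 2) := by
  rw [plusProd_mul_plusProd, sum_mul, ← sum_sub_distrib]
  refine dvd_sum fun j hj ↦ ?_
  have hj := Nat.lt_succ_iff.1 (mem_range.1 hj)
  set A := eulerProd n * (eulerProd (n - j))⁻¹ with hA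
  set B := eulerProd (2 * n + 1) * (eulerProd (n + 1 + j))⁻¹ with hB
  have h1 : (X : ℚ⟦X⟧) ^ (n - j + 1) ∣ A - 1 := X_pow_dvd_eulerProd_mul_inv_sub_one (by omega)
  have h2 : (X : ℚ⟦X⟧) ^ (n - j + 1) ∣ B - 1 :=
    (pow_dvd_pow _ (by omega)).trans (X_pow_dvd_eulerProd_mul_inv_sub_one (by omega))
  have h3 : X ^ ((j + 1).choose 2) * (eulerProd (2 * n + 1) * (eulerProd (n - j))⁻¹ *
      (eulerProd (n + 1 + j))⁻¹) * eulerProd n - X ^ ((j + 1).choose 2) =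
      X ^ ((j + 1).choose 2) * (A * (B - 1) + (A - 1)) := by
    rw [hA, hB]; ring
  rw [h3]
  -- The precision `j` lost in the Gaussian binomial is regained from the triangular exponent.
  have h4 : j ≤ (j + 1).choose 2 := by
    rw [Nat.choose_succ_succ' j 1, Nat.choose_one_right]; omega
  refine (pow_dvd_pow _ (show n + 1 ≤ (j + 1).choose 2 + (n - j + 1) by omega)).trans ?_
  rw [pow_add]
  exact mul_dvd_mul_left _ (dvd_add (h2.mul_left _) h1)

/-! ### Generating functions -/

open PowerSeries.WithPiTopology in
/-- An infinite product of factors `1 + O(q ^ (i + 1))` agrees with its `n`-th partial product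
modulo `q ^ (n + 1)`. -/
lemma X_pow_dvd_hasProd_sub {F : ℚ⟦X⟧} (g : ℕ → ℚ⟦X⟧)
    (h : HasProd (fun i ↦ 1 + X ^ (i + 1) * g i) F) (n : ℕ) :
    X ^ (n + 1) ∣ F - ∏ i ∈ range n, (1 + X ^ (i + 1) * g i) := by
  have hst (m : ℕ) (hm : n ≤ m) : X ^ (n + 1) ∣
      ∏ i ∈ range m, (1 + X ^ (i + 1) * g i) - ∏ i ∈ range n, (1 + X ^ (i + 1) * g i) := by
    induction m, hm using Nat.le_induction with
    | base => simp
    | succ m hm ih =>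
      rw [prod_range_succ, mul_add, mul_one, add_sub_right_comm]
      exact dvd_add ih (((pow_dvd_pow _ (by omega)).mul_right _).mul_left _)
  rw [X_pow_dvd_iff]
  intro k hk
  have ht := (tendsto_iff_coeff_tendsto ℚ _ _ _).1 h.tendsto_prod_nat k
  have hc : Filter.Tendsto (fun m ↦ coeff k (∏ i ∈ range m, (1 + X ^ (i + 1) * g i)))
      Filter.atTop (nhds (coeff k (∏ i ∈ range n, (1 + X ^ (i + 1) * g i)))) := by
    refine tendsto_atTop_of_eventually_const (i₀ := n) fun m hm ↦ ?_
    have := X_pow_dvd_iff.1 (hst m hm) k hk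
    rwa [map_sub, sub_eq_zero] at this
  rw [map_sub, tendsto_nhds_unique ht hc, sub_self]

/-- The generating function of partitions into distinct parts. -/
noncomputable def distinctSeries : ℚ⟦X⟧ := PowerSeries.mk fun n ↦ (Qd n : ℚ)

/-- The generating function of all partitions. -/
noncomputable def partitionSeries : ℚ⟦X⟧ := PowerSeries.mk fun n ↦ (pN n : ℚ)

open PowerSeries.WithPiTopology in
lemma X_pow_dvd_distinctSeries_sub (n : ℕ) :
    X ^ (n + 1) ∣ distinctSeries - plusProd n := by
  have h := Nat.Partition.hasProd_powerSeriesMk_card_countRestricted ℚ (m := 2) two_pos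
  have h' : HasProd (fun i ↦ 1 + (X : ℚ⟦X⟧) ^ (i + 1) * 1) distinctSeries := by
    convert! h using 1
    · ext1 i
      simp [sum_range_succ]
    · simp [distinctSeries, Qd, Nat.Partition.countRestricted_two]
  simpa [plusProd] using X_pow_dvd_hasProd_sub _ h' n

open PowerSeries.WithPiTopology in
lemma X_pow_dvd_partitionSeries_mul_sub (n : ℕ) :
    X ^ (n + 1) ∣ partitionSeries * eulerProd n - 1 := by
  have h := Nat.Partition.hasProd_powerSeriesMk_card_restricted ℚ (fun _ ↦ True)
  have hE := hasProd_one_sub_X_pow ℚ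
  have hPE := h.mul hE
  have h1 : (fun i : ℕ ↦ (if True then ∑' j : ℕ, (X : ℚ⟦X⟧) ^ ((i + 1) * j) else 1) *
      (1 - X ^ (i + 1))) = fun _ ↦ 1 := by
    ext1 i
    simp_rw [if_true, pow_mul]
    exact tsum_pow_mul_one_sub_of_constantCoeff_eq_zero (by simp)
  rw [h1] at hPE
  have h2 := hPE.unique hasProd_one
  have h3 : PowerSeries.mk (fun n ↦ (#(Nat.Partition.restricted n fun _ ↦ True) : ℚ)) =
      partitionSeries := by
    simp [partitionSeries, pN, Nat.Partition.restricted, Finset.card_univ]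
  rw [h3] at h2
  have h4 : X ^ (n + 1) ∣ pentagonalSeries ℚ - eulerProd n := by
    have := X_pow_dvd_hasProd_sub (F := pentagonalSeries ℚ) (fun _ ↦ -1)
      (by simpa [← sub_eq_add_neg] using hE) n
    simpa [eulerProd, ← sub_eq_add_neg] using this
  have h5 : partitionSeries * eulerProd n - 1 =
      -(partitionSeries * (pentagonalSeries ℚ - eulerProd n)) := by
    linear_combination h2
  rw [h5]
  exact (h4.mul_left _).neg_right

lemma plusProd_mul_eulerProd (n : ℕ) :
    plusProd n * eulerProd n = expand 2 two_ne_zero (eulerProd n) := by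
  rw [plusProd, eulerProd, map_prod, ← prod_mul_distrib]
  refine prod_congr rfl fun i _ ↦ ?_
  simp only [map_sub, map_one, map_pow, expand_X]
  ring

/-- Modulo `q ^ (n + 1)`, the generating function of partitions into distinct parts is the
triangular theta series times `1 / (q ^ 2; q ^ 2)_∞`. -/
lemma X_pow_dvd_distinctSeries_sub_theta (n : ℕ) :
    X ^ (n + 1) ∣ distinctSeries - (∑ j ∈ range (n + 1), X ^ ((j + 1).choose 2)) *
      expand 2 two_ne_zero partitionSeries := by
  have h1 := X_pow_dvd_distinctSeries_sub n
  have h2 := X_pow_dvd_gauss n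
  have h3 : X ^ (n + 1) ∣ expand 2 two_ne_zero partitionSeries *
      expand 2 two_ne_zero (eulerProd n) - 1 := by
    have := map_dvd (expand (R := ℚ) 2 two_ne_zero) (X_pow_dvd_partitionSeries_mul_sub n)
    rw [map_pow, expand_X, ← pow_mul, map_sub, map_mul, map_one] at this
    exact (pow_dvd_pow _ (by omega)).trans this
  rw [← plusProd_mul_eulerProd] at h3
  have h4 : distinctSeries - (∑ j ∈ range (n + 1), X ^ ((j + 1).choose 2)) *
      expand 2 two_ne_zero partitionSeries = (distinctSeries - plusProd n) -
      plusProd n * (expand 2 two_ne_zero partitionSeries * (plusProd n * eulerProd n) - 1) +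
      (plusProd n * plusProd n * eulerProd n - ∑ j ∈ range (n + 1), X ^ ((j + 1).choose 2)) *
      expand 2 two_ne_zero partitionSeries := by ring
  rw [h4]
  exact dvd_add (dvd_sub h1 (h3.mul_left _)) (h2.mul_right _)

lemma Qd_eq_sum (n : ℕ) :
    Qd n = ∑ j ∈ range (n + 1), if (j + 1).choose 2 ≤ n ∧ 2 ∣ n - (j + 1).choose 2 then
      pN ((n - (j + 1).choose 2) / 2) else 0 := by
  have h := X_pow_dvd_iff.1 (X_pow_dvd_distinctSeries_sub_theta n) n n.lt_succ_self
  rw [map_sub, sub_eq_zero, sum_mul, map_sum, distinctSeries, coeff_mk] at h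
  have h' : (Qd n : ℚ) = ((∑ j ∈ range (n + 1),
      if (j + 1).choose 2 ≤ n ∧ 2 ∣ n - (j + 1).choose 2 then
      pN ((n - (j + 1).choose 2) / 2) else 0 : ℕ) : ℚ) := by
    rw [h, Nat.cast_sum]
    refine sum_congr rfl fun j _ ↦ ?_
    rw [coeff_X_pow_mul', coeff_expand]
    by_cases h1 : (j + 1).choose 2 ≤ n <;> by_cases h2 : 2 ∣ n - (j + 1).choose 2 <;>
      simp [h1, h2, partitionSeries]
  exact_mod_cast h'

/-! ### Counting parts -/

/-- Removing one copy of `i` from the partitions of `n` that contain `i`. -/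
lemma sum_partition_eq_sum_cons {n i : ℕ} (hi : 1 ≤ i) (hin : i ≤ n) (F : Multiset ℕ → ℤ)
    (hF : ∀ t, i ∉ t → F t = 0) :
    ∑ p : n.Partition, F p.parts = ∑ q : (n - i).Partition, F (i ::ₘ q.parts) := by
  have h1 : ∑ p : n.Partition, F p.parts = ∑ p : n.Partition with i ∈ p.parts, F p.parts := by
    rw [sum_filter]
    refine sum_congr rfl fun p _ ↦ ?_
    split_ifs with h
    · rfl
    · exact hF _ h
  rw [h1, sum_subtype (p := fun p : n.Partition ↦ i ∈ p.parts) _ (by simp),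
    ← (Nat.Partition.partitionWithPartEquiv hi hin).symm.sum_comp]
  refine sum_congr rfl fun q _ ↦ ?_
  rw [Nat.Partition.partitionWithPartEquiv_symm_apply_parts]

/-- The total multiplicity of the part `i` in the partitions of `n` satisfying `P`. -/
def multTotal (P : Multiset ℕ → Prop) [DecidablePred P] (i n : ℕ) : ℤ :=
  ∑ p : n.Partition, if P p.parts then (p.parts.count i : ℤ) else 0

lemma multTotal_of_lt (P : Multiset ℕ → Prop) [DecidablePred P] {i n : ℕ} (h : n < i) :
    multTotal P i n = 0 := by
  refine sum_eq_zero fun p _ ↦ ?_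
  have : i ∉ p.parts := fun hi ↦ absurd (p.le_of_mem_parts hi) (by omega)
  simp [Multiset.count_eq_zero_of_notMem this]

lemma sum_card_parts (P : Multiset ℕ → Prop) [DecidablePred P] (n : ℕ) :
    ∑ p : n.Partition with P p.parts, (Multiset.card p.parts : ℤ) =
      ∑ i ∈ Icc 1 n, multTotal P i n := by
  simp only [multTotal]
  rw [sum_comm, sum_filter]
  refine sum_congr rfl fun p _ ↦ ?_
  split_ifs
  · rw [← Multiset.sum_count_eq_card (s := Icc 1 n), Nat.cast_sum]
    exact fun a ha ↦ mem_Icc.2 ⟨p.parts_pos ha, p.le_of_mem_parts ha⟩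
  · simp

lemma multTotal_restricted (A : ℕ → Prop) [DecidablePred A] {i n : ℕ} (hi : 1 ≤ i) (hin : i ≤ n)
    (hA : A i) : multTotal (fun t ↦ ∀ x ∈ t, A x) i n =
      #(Nat.Partition.restricted (n - i) A) + 1 * multTotal (fun t ↦ ∀ x ∈ t, A x) i (n - i) := by
  rw [multTotal, sum_partition_eq_sum_cons hi hin
    (fun t ↦ if ∀ x ∈ t, A x then (t.count i : ℤ) else 0)
    (fun t ht ↦ by simp [Multiset.count_eq_zero_of_notMem ht]),
    Nat.Partition.restricted, card_filter, Nat.cast_sum, one_mul, multTotal, ← sum_add_distrib]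
  refine sum_congr rfl fun q _ ↦ ?_
  by_cases h : ∀ x ∈ q.parts, A x
  · rw [if_pos (by simpa [hA] using h), if_pos h, if_pos h, Multiset.count_cons_self]
    push_cast
    ring
  · rw [if_neg (by simpa [hA] using h), if_neg h, if_neg h]
    simp

lemma multTotal_restricted_of_not (A : ℕ → Prop) [DecidablePred A] {i : ℕ} (n : ℕ) (hA : ¬ A i) :
    multTotal (fun t ↦ ∀ x ∈ t, A x) i n = 0 := by
  refine sum_eq_zero fun p _ ↦ ?_
  split_ifs with h
  · rw [Multiset.count_eq_zero_of_notMem fun hi ↦ hA (h i hi), Nat.cast_zero]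
  · rfl

lemma multTotal_nodup {i n : ℕ} (hi : 1 ≤ i) (hin : i ≤ n) :
    multTotal Multiset.Nodup i n = Qd (n - i) + -1 * multTotal Multiset.Nodup i (n - i) := by
  rw [multTotal, sum_partition_eq_sum_cons hi hin
    (fun t ↦ if t.Nodup then (t.count i : ℤ) else 0)
    (fun t ht ↦ by simp [Multiset.count_eq_zero_of_notMem ht]),
    Qd, Nat.Partition.distincts, card_filter, Nat.cast_sum, multTotal, mul_sum, ← sum_add_distrib]
  refine sum_congr rfl fun q _ ↦ ?_
  by_cases h : q.parts.Nodup
  · by_cases h' : i ∈ q.parts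
    · simp [h, h']
    · simp [h, h']
  · simp [h]

/-- Unrolling the recursion `c n = f (n - i) + ε * c (n - i)`. -/
lemma eq_sum_of_recursion {i : ℕ} (hi : 1 ≤ i) (ε : ℤ) (c f : ℕ → ℤ) (h0 : ∀ n < i, c n = 0)
    (h : ∀ n, i ≤ n → c n = f (n - i) + ε * c (n - i)) (n : ℕ) :
    c n = ∑ j ∈ range (n / i), ε ^ j * f (n - i * (j + 1)) := by
  induction n using Nat.strong_induction_on with
  | _ n ih =>
    rcases lt_or_ge n i with hn | hn
    · simp [h0 n hn, Nat.div_eq_of_lt hn]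
    · rw [h n hn, ih (n - i) (by omega), Nat.div_eq_sub_div (by omega) hn, sum_range_succ',
        mul_sum, add_comm]
      congr 1
      · refine sum_congr rfl fun j _ ↦ ?_
        rw [pow_succ, show n - i - i * (j + 1) = n - i * (j + 1 + 1) by
          rw [Nat.sub_sub]; congr 1; ring]
        ring
      · simp

/-- Grouping the pairs `(i, j)` with `i * j ≤ n` by the product. -/
lemma sum_hyperbola (n : ℕ) (g : ℕ → ℕ → ℤ) (f : ℕ → ℤ) :
    ∑ i ∈ Icc 1 n, ∑ j ∈ range (n / i), g i (j + 1) * f (n - i * (j + 1)) =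
      ∑ N ∈ Icc 1 n, f (n - N) * ∑ p ∈ N.divisorsAntidiagonal, g p.1 p.2 := by
  simp_rw [mul_sum]
  rw [sum_sigma', sum_sigma']
  refine sum_bij' (fun x _ ↦ ⟨x.1 * (x.2 + 1), (x.1, x.2 + 1)⟩) (fun y _ ↦ ⟨y.2.1, y.2.2 - 1⟩)
    ?_ ?_ ?_ ?_ ?_
  · rintro ⟨i, j⟩ h
    simp only [mem_sigma, mem_Icc, mem_range, Nat.mem_divisorsAntidiagonal] at h ⊢
    have h1 : i * (j + 1) ≤ n := by
      have := (Nat.le_div_iff_mul_le (by omega)).1 (Nat.succ_le_of_lt h.2)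
      rwa [mul_comm] at this
    have h2 : 0 < i * (j + 1) := Nat.mul_pos (by omega) (by omega)
    exact ⟨⟨h2, h1⟩, trivial, h2.ne'⟩
  · rintro ⟨N, i, j⟩ h
    simp only [mem_sigma, mem_Icc, mem_range, Nat.mem_divisorsAntidiagonal] at h ⊢
    obtain ⟨⟨h1, h2⟩, rfl, h3⟩ := h
    have hi : 0 < i := Nat.pos_of_ne_zero fun h ↦ h3 (by simp [h])
    have hj : 0 < j := Nat.pos_of_ne_zero fun h ↦ h3 (by simp [h])
    refine ⟨⟨hi, (Nat.le_mul_of_pos_right i hj).trans h2⟩, ?_⟩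
    have := (Nat.le_div_iff_mul_le hi).2 (show j * i ≤ n by rwa [mul_comm])
    omega
  · rintro ⟨i, j⟩ _
    simp
  · rintro ⟨N, i, j⟩ h
    simp only [mem_sigma, mem_Icc, Nat.mem_divisorsAntidiagonal] at h
    obtain ⟨_, rfl, h3⟩ := h
    have hj : 0 < j := Nat.pos_of_ne_zero fun h ↦ h3 (by simp [h])
    simp [Nat.sub_add_cancel hj]
  · rintro ⟨i, j⟩ _
    ring

lemma sum_card_restricted (A : ℕ → Prop) [DecidablePred A] (n : ℕ) :
    ∑ p ∈ Nat.Partition.restricted n A, (Multiset.card p.parts : ℤ) =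
      ∑ N ∈ Icc 1 n, (#(Nat.Partition.restricted (n - N) A) : ℤ) *
        ∑ p ∈ N.divisorsAntidiagonal, if A p.1 then 1 else 0 := by
  rw [← sum_hyperbola n (fun i _ ↦ if A i then 1 else 0)
    (fun m ↦ (#(Nat.Partition.restricted m A) : ℤ)), Nat.Partition.restricted,
    sum_card_parts (fun t ↦ ∀ x ∈ t, A x)]
  refine sum_congr rfl fun i hi ↦ ?_
  have hi := (mem_Icc.1 hi).1
  by_cases hA : A i
  · rw [eq_sum_of_recursion hi 1 (multTotal (fun t ↦ ∀ x ∈ t, A x) i)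
      (fun m ↦ #(Nat.Partition.restricted m A)) (fun m hm ↦ multTotal_of_lt _ hm)
      (fun m hm ↦ multTotal_restricted A hi hm hA)]
    simp [hA]
  · simp [hA, multTotal_restricted_of_not A n hA]

lemma distinctPartsTotal_eq (n : ℕ) :
    (distinctPartsTotal n : ℤ) = ∑ N ∈ Icc 1 n, (Qd (n - N) : ℤ) *
      ∑ p ∈ N.divisorsAntidiagonal, (-1) ^ (p.2 - 1) := by
  rw [← sum_hyperbola n (fun _ j ↦ (-1) ^ (j - 1)) (fun m ↦ (Qd m : ℤ)), distinctPartsTotal,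
    Nat.cast_sum, Nat.Partition.distincts, sum_card_parts Multiset.Nodup]
  refine sum_congr rfl fun i hi ↦ ?_
  have hi := (mem_Icc.1 hi).1
  rw [eq_sum_of_recursion hi (-1) (multTotal Multiset.Nodup i) (fun m ↦ (Qd m : ℤ))
    (fun m hm ↦ multTotal_of_lt _ hm) (fun m hm ↦ multTotal_nodup hi hm)]
  simp

lemma oddPartsTotal_eq (n : ℕ) :
    (oddPartsTotal n : ℤ) = ∑ N ∈ Icc 1 n, (Qd (n - N) : ℤ) *
      ∑ p ∈ N.divisorsAntidiagonal, if ¬ Even p.1 then 1 else 0 := by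
  rw [oddPartsTotal, Nat.cast_sum, Nat.Partition.odds, sum_card_restricted]
  simp_rw [Qd, ← Nat.Partition.card_odds_eq_card_distincts, Nat.Partition.odds]

lemma SN_eq (n : ℕ) :
    (SN n : ℤ) = ∑ N ∈ Icc 1 n, (pN (n - N) : ℤ) * #N.divisorsAntidiagonal := by
  have h := sum_card_restricted (fun _ ↦ True) n
  simpa [SN, pN, Nat.Partition.restricted, Finset.card_univ] using h

/-- The difference of the two divisor sums counts the even divisors of `N`; an even `N` has as many
of these as `N / 2` has divisors. -/
lemma sum_divisors_odd_sub_sign (N : ℕ) :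
    (∑ p ∈ N.divisorsAntidiagonal, if ¬ Even p.1 then (1 : ℤ) else 0) -
      ∑ p ∈ N.divisorsAntidiagonal, (-1) ^ (p.2 - 1) =
      if 2 ∣ N then (#(N / 2).divisorsAntidiagonal : ℤ) else 0 := by
  have h1 : (∑ p ∈ N.divisorsAntidiagonal, if ¬ Even p.1 then (1 : ℤ) else 0) =
      ∑ p ∈ N.divisorsAntidiagonal, if ¬ Even p.2 then (1 : ℤ) else 0 :=
    sum_nbij' Prod.swap Prod.swap (by simp) (by simp) (by simp) (by simp) (by simp)
  have h2 : ∀ p ∈ N.divisorsAntidiagonal, (if ¬ Even p.2 then (1 : ℤ) else 0) -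
      (-1) ^ (p.2 - 1) = if Even p.2 then 1 else 0 := by
    intro p hp
    have hp2 : 1 ≤ p.2 := Nat.pos_of_ne_zero (Nat.ne_zero_of_mem_divisorsAntidiagonal hp).2
    by_cases h : Even p.2
    · have : Odd (p.2 - 1) := Nat.Even.sub_odd hp2 h odd_one
      simp [h, this.neg_one_pow]
    · have : Even (p.2 - 1) := Nat.Odd.sub_odd (Nat.not_even_iff_odd.1 h) odd_one
      simp [h, this.neg_one_pow]
  rw [h1, ← sum_sub_distrib, sum_congr rfl h2, sum_boole]
  split_ifs with h
  · obtain ⟨M, rfl⟩ := h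
    rw [Nat.mul_div_cancel_left M two_pos]
    congr 1
    symm
    refine card_bij (fun p _ ↦ (p.1, 2 * p.2)) ?_ ?_ ?_
    · rintro ⟨i, j⟩ hp
      simp only [mem_filter, Nat.mem_divisorsAntidiagonal] at hp ⊢
      refine ⟨⟨?_, by omega⟩, even_two_mul j⟩
      rw [← hp.1]
      ring
    · rintro ⟨i, j⟩ _ ⟨i', j'⟩ _ h
      simpa using h
    · rintro ⟨i, j⟩ hp
      simp only [mem_filter, Nat.mem_divisorsAntidiagonal] at hp
      obtain ⟨⟨h1, h2⟩, j, rfl⟩ := hp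
      refine ⟨(i, j), ?_, by simp [two_mul]⟩
      rw [Nat.mem_divisorsAntidiagonal]
      exact ⟨by linarith, by omega⟩
  · rw [Nat.cast_eq_zero, Finset.card_eq_zero, filter_eq_empty_iff]
    intro p hp h'
    refine h ?_
    rw [← (Nat.mem_divisorsAntidiagonal.1 hp).1]
    exact h'.two_dvd.mul_left _

lemma b_eq (n : ℕ) :
    b (2 * (n : ℤ) + 1) = ∑ M ∈ Icc 1 n, (Qd (2 * (n - M) + 1) : ℤ) * #M.divisorsAntidiagonal := by
  rw [b, if_pos (by positivity), show (2 * (n : ℤ) + 1).toNat = 2 * n + 1 by omega,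
    oddPartsTotal_eq, distinctPartsTotal_eq, ← sum_sub_distrib]
  simp_rw [← mul_sub, sum_divisors_odd_sub_sign, mul_ite, mul_zero]
  rw [← sum_filter]
  symm
  refine sum_bij (fun M _ ↦ 2 * M) ?_ ?_ ?_ ?_
  · intro M hM
    simp only [mem_filter, mem_Icc] at hM ⊢
    omega
  · intro M _ M' _ h
    omega
  · intro N hN
    simp only [mem_filter, mem_Icc] at hN
    exact ⟨N / 2, by simp only [mem_Icc]; omega, by omega⟩
  · intro M hM
    have := mem_Icc.1 hM
    rw [Nat.mul_div_cancel_left M two_pos, show 2 * n + 1 - 2 * M = 2 * (n - M) + 1 by omega]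

/-! ### Odd arguments and the final sum -/

lemma choose_two_of_mod_two (a : ℕ) :
    (4 * a + 2 + 1).choose 2 = 2 * ((a + 1) * (4 * a + 1)) + 1 := by
  have := two_mul_choose_two (4 * a + 2 + 1)
  nlinarith

lemma choose_two_of_mod_one (a : ℕ) :
    (4 * a + 1 + 1).choose 2 = 2 * (a * (4 * a + 3)) + 1 := by
  have := two_mul_choose_two (4 * a + 1 + 1)
  nlinarith

lemma exists_of_choose_two_odd {j : ℕ} (h : Odd ((j + 1).choose 2)) :
    (∃ a, j = 4 * a + 2) ∨ ∃ a, j = 4 * a + 1 := by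
  obtain ⟨a, ha⟩ : ∃ a, j = 4 * a ∨ j = 4 * a + 1 ∨ j = 4 * a + 2 ∨ j = 4 * a + 3 :=
    ⟨j / 4, by omega⟩
  rcases ha with rfl | rfl | rfl | rfl
  · have := two_mul_choose_two (4 * a + 1)
    have h' : (4 * a + 1).choose 2 = 2 * (a * (4 * a + 1)) := by nlinarith
    rw [h'] at h
    exact absurd h (by simp)
  · exact Or.inr ⟨a, rfl⟩
  · exact Or.inl ⟨a, rfl⟩
  · have := two_mul_choose_two (4 * a + 3 + 1)
    have h' : (4 * a + 3 + 1).choose 2 = 2 * ((a + 1) * (4 * a + 3)) := by nlinarith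
    rw [h'] at h
    exact absurd h (by simp)

/-- For odd argument only the odd triangular numbers contribute to `Qd_eq_sum`; these are the
numbers `2 * k * (4 * k - 3) + 1`, the index being `4 * k - 2` for `k ≥ 1` and `1 - 4 * k` for
`k ≤ 0`. -/
lemma Qd_odd (m B : ℕ) (hB : m + 1 ≤ B) :
    (Qd (2 * m + 1) : ℤ) = ∑ k ∈ Icc (-(B : ℤ)) B, pZ ((m : ℤ) - k * (4 * k - 3)) := by
  simp_rw [pZ]
  rw [Qd_eq_sum, ← sum_filter, ← sum_filter, Nat.cast_sum]
  have hj : ∀ j, j ∈ (range (2 * m + 1 + 1)).filter (fun j ↦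
      (j + 1).choose 2 ≤ 2 * m + 1 ∧ 2 ∣ 2 * m + 1 - (j + 1).choose 2) →
      (∃ a, j = 4 * a + 2 ∧ (a + 1) * (4 * a + 1) ≤ m) ∨
        ∃ a, j = 4 * a + 1 ∧ a * (4 * a + 3) ≤ m := by
    intro j hj
    obtain ⟨-, h1, h2⟩ := mem_filter.1 hj
    have : Odd ((j + 1).choose 2) := by rw [Nat.odd_iff]; omega
    rcases exists_of_choose_two_odd this with ⟨a, rfl⟩ | ⟨a, rfl⟩
    · rw [choose_two_of_mod_two] at h1
      exact Or.inl ⟨a, rfl, by omega⟩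
    · rw [choose_two_of_mod_one] at h1
      exact Or.inr ⟨a, rfl, by omega⟩
  have hk : ∀ k, k ∈ (Icc (-(B : ℤ)) B).filter (fun k ↦ 0 ≤ (m : ℤ) - k * (4 * k - 3)) →
      (∃ a : ℕ, k = a + 1 ∧ (a + 1) * (4 * a + 1) ≤ m) ∨
        ∃ a : ℕ, k = -a ∧ a * (4 * a + 3) ≤ m := by
    intro k hk
    obtain ⟨-, h1⟩ := mem_filter.1 hk
    rcases le_or_gt 1 k with h | h
    · obtain ⟨a, ha⟩ := Int.eq_ofNat_of_zero_le (show 0 ≤ k - 1 by omega)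
      obtain rfl : k = a + 1 := by omega
      refine Or.inl ⟨a, rfl, ?_⟩
      zify
      linarith
    · obtain ⟨a, ha⟩ := Int.eq_ofNat_of_zero_le (show 0 ≤ -k by omega)
      obtain rfl : k = -a := by omega
      refine Or.inr ⟨a, rfl, ?_⟩
      zify
      linarith
  refine sum_bij' (fun j _ ↦ if j % 4 = 2 then ((j : ℤ) + 2) / 4 else (1 - (j : ℤ)) / 4)
    (fun k _ ↦ if 1 ≤ k then (4 * k - 2).toNat else (1 - 4 * k).toNat) ?_ ?_ ?_ ?_ ?_
  · intro j h
    rcases hj j h with ⟨a, rfl, ha⟩ | ⟨a, rfl, ha⟩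
    · rw [if_pos (by omega), show (((4 * a + 2 : ℕ) : ℤ) + 2) / 4 = a + 1 by omega, mem_filter,
        mem_Icc]
      have : a ≤ m := by nlinarith
      refine ⟨by omega, ?_⟩
      zify at ha
      linarith
    · rw [if_neg (by omega), show (1 - ((4 * a + 1 : ℕ) : ℤ)) / 4 = -a by omega, mem_filter,
        mem_Icc]
      have : a ≤ m := by nlinarith
      refine ⟨by omega, ?_⟩
      zify at ha
      linarith
  · intro k h
    rcases hk k h with ⟨a, rfl, ha⟩ | ⟨a, rfl, ha⟩
    · rw [if_pos (by omega), show (4 * ((a : ℤ) + 1) - 2).toNat = 4 * a + 2 by omega, mem_filter,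
        mem_range, choose_two_of_mod_two]
      refine ⟨by nlinarith, by omega, by omega⟩
    · rw [if_neg (by omega), show (1 - 4 * (-a : ℤ)).toNat = 4 * a + 1 by omega, mem_filter,
        mem_range, choose_two_of_mod_one]
      refine ⟨by nlinarith, by omega, by omega⟩
  · intro j h
    rcases hj j h with ⟨a, rfl, -⟩ | ⟨a, rfl, -⟩ <;> split_ifs <;> omega
  · intro k h
    rcases hk k h with ⟨a, rfl, -⟩ | ⟨a, rfl, -⟩ <;> split_ifs <;> omega
  · intro j h
    congr 2
    rcases hj j h with ⟨a, rfl, ha⟩ | ⟨a, rfl, ha⟩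
    · rw [if_pos (by omega), show (((4 * a + 2 : ℕ) : ℤ) + 2) / 4 = a + 1 by omega,
        choose_two_of_mod_two, show (m : ℤ) - (a + 1) * (4 * (a + 1) - 3) =
          m - ((a + 1) * (4 * a + 1) : ℕ) by push_cast; ring]
      omega
    · rw [if_neg (by omega), show (1 - ((4 * a + 1 : ℕ) : ℤ)) / 4 = -a by omega,
        choose_two_of_mod_one, show (m : ℤ) - (-a) * (4 * (-a) - 3) =
          m - (a * (4 * a + 3) : ℕ) by push_cast; ring]
      omega

lemma sum_pZ_eq_S (n : ℕ) (x : ℤ) (hx : x ≤ n) :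
    ∑ M ∈ Icc 1 n, pZ (x - M) * #M.divisorsAntidiagonal = S x := by
  rw [S]
  split_ifs with h
  · obtain ⟨m, rfl⟩ := Int.eq_ofNat_of_zero_le h.le
    rw [Int.toNat_natCast, SN_eq]
    symm
    refine sum_subset_zero_on_sdiff (Icc_subset_Icc_right (by omega)) ?_ ?_
    · intro M hM
      simp only [mem_sdiff, mem_Icc] at hM
      rw [pZ, if_neg (by omega), zero_mul]
    · intro M hM
      have := mem_Icc.1 hM
      rw [pZ, if_pos (by omega), show ((m : ℤ) - M).toNat = m - M by omega]
  · refine sum_eq_zero fun M hM ↦ ?_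
    have := mem_Icc.1 hM
    rw [pZ, if_neg (by omega), zero_mul]

end GaussTriangular

/-- `b(2n+1) = ∑_{k=-∞}^{∞} S(n - k(4k-3))`. -/
theorem statement12 (n : ℕ) (hn : 0 < n) :
    b (2 * (n : ℤ) + 1) = ∑ᶠ k : ℤ, S ((n : ℤ) - k * (4 * k - 3)) := by
  have hpos (k : ℤ) : 0 ≤ k * (4 * k - 3) := by
    rcases le_or_gt k 0 with h | h <;> nlinarith
  rw [finsum_eq_sum_of_support_subset (s := Icc (-((n + 1 : ℕ) : ℤ)) ((n + 1 : ℕ) : ℤ))]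
  · simp_rw [← fun k : ℤ ↦ GaussTriangular.sum_pZ_eq_S n ((n : ℤ) - k * (4 * k - 3))
      (by linarith [hpos k])]
    rw [GaussTriangular.b_eq, sum_comm]
    refine sum_congr rfl fun M hM ↦ ?_
    have hM := mem_Icc.1 hM
    rw [GaussTriangular.Qd_odd (n - M) (n + 1) (by omega), sum_mul]
    refine sum_congr rfl fun k _ ↦ ?_
    rw [show ((n - M : ℕ) : ℤ) - k * (4 * k - 3) = (n : ℤ) - k * (4 * k - 3) - M by
      rw [Nat.cast_sub hM.2]; ring]
  · intro k hk
    rw [Function.mem_support] at hk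
    have hlt : 0 < (n : ℤ) - k * (4 * k - 3) := by
      by_contra h
      exact hk (by rw [S, if_neg h])
    simp only [coe_Icc, Set.mem_Icc]
    push_cast
    constructor <;> nlinarith
end

section
/- Let k and n be positive integers. Then (−1)^k Σ_{j=0}^{n} (−1)^j b(n−j) · MP_k(j) ≥ 0. -/
/-!
The generating series of `b` is `Q(X) * ∑ X ^ (2 d) / (1 - X ^ (2 d))`, where `Q` is the series of
partitions into odd parts, or equally (Euler) into distinct parts: the multiplicity of `d`, summed
over partitions into odd parts, has series `Q * X ^ d / (1 - X ^ d)` for `d` odd, and over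
partitions into distinct parts it has series
`Q * X ^ d / (1 + X ^ d) = Q * (X ^ d / (1 - X ^ d) - 2 X ^ (2 d) / (1 - X ^ (2 d)))`.
Summing over `d`, the terms with odd `d` cancel (`b_eq`, `coeff_bFactor_nonneg`).

Splitting by the largest part `2 m + 1`, the series of `(-1) ^ j * MP k j` is
`(-1) ^ k * ∑_{m ≥ k} X ^ (k (2 m + 1)) * ∏_{i < m} (1 - X ^ (2 i + 1)) / (1 - X ^ (2 i + 2))`
(`MP_eq`, `topSeries_eq`). Multiplication by `Q = ∏ 1 / (1 - X ^ (2 i + 1))` cancels every factor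
`1 - X ^ (2 i + 1)` with `i < m` and leaves the series of the partitions whose parts are odd and
greater than `2 m`, or even and at most `2 m` (`oddSeries_mul_signedSeries`). The signed convolution
is thus a coefficient of a sum of products of series with nonnegative coefficients.

All products are handled by deleting parts one at a time (`partSeries_cons`), and the sums over `d`
and `m` are truncated at `n`, so no infinite products or sums of series are needed.
-/


open Nat Finset

/-! ### Generating series of statistics of partitions -/

/-- Generating series, over all partitions `p`, of the statistic `F` of the multiset of parts. -/
noncomputable def partSeries (F : Multiset ℕ → ℤ) : PowerSeries ℤ :=
  PowerSeries.mk fun n => ∑ p : Nat.Partition n, F p.parts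

theorem coeff_partSeries (F : Multiset ℕ → ℤ) (n : ℕ) :
    PowerSeries.coeff n (partSeries F) = ∑ p : Nat.Partition n, F p.parts := by
  simp [partSeries]

theorem partSeries_congr {F F' : Multiset ℕ → ℤ}
    (h : ∀ s : Multiset ℕ, (∀ x ∈ s, 0 < x) → F s = F' s) : partSeries F = partSeries F' := by
  ext n
  simp only [coeff_partSeries]
  exact Finset.sum_congr rfl fun p _ => h _ fun x hx => p.parts_pos hx

theorem partSeries_add (F F' : Multiset ℕ → ℤ) :
    partSeries (fun s => F s + F' s) = partSeries F + partSeries F' := by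
  ext n
  simp [coeff_partSeries, Finset.sum_add_distrib]

theorem partSeries_neg (F : Multiset ℕ → ℤ) :
    partSeries (fun s => - F s) = - partSeries F := by
  ext n
  simp [coeff_partSeries]

/-- A statistic supported on partitions containing the part `d`: deleting one copy of `d` pulls
out a factor `X ^ d`. -/
theorem partSeries_cons {d : ℕ} (hd : 0 < d) {F : Multiset ℕ → ℤ} (hF : ∀ s, d ∉ s → F s = 0) :
    partSeries F = PowerSeries.X ^ d * partSeries (fun s => F (d ::ₘ s)) := by
  ext n
  rw [PowerSeries.coeff_X_pow_mul']
  simp only [coeff_partSeries]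
  split_ifs with h
  · symm
    refine Finset.sum_of_injOn
      (fun p : Nat.Partition (n - d) => (⟨d ::ₘ p.parts, ?_, ?_⟩ : Nat.Partition n)) ?_ ?_ ?_ ?_
    · intro i hi
      rcases Multiset.mem_cons.1 hi with rfl | hi
      · exact hd
      · exact p.parts_pos hi
    · rw [Multiset.sum_cons, p.parts_sum]; omega
    · intro p _ q _ hpq
      simp only [Nat.Partition.mk.injEq, Multiset.cons_inj_right] at hpq
      exact Nat.Partition.ext hpq
    · intro p _; simp
    · intro p _ hp
      apply hF
      intro hmem
      apply hp
      refine ⟨⟨p.parts.erase d, fun hi => p.parts_pos (Multiset.mem_of_mem_erase hi), ?_⟩,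
        by simp, ?_⟩
      · have := Multiset.sum_erase hmem
        rw [p.parts_sum] at this
        omega
      · apply Nat.Partition.ext
        simp [Multiset.cons_erase hmem]
    · intro p _; rfl
  · refine Finset.sum_eq_zero fun p _ => hF _ fun hmem => h ?_
    exact p.le_of_mem_parts hmem

/-- Splitting a statistic according to whether the part `d` occurs. -/
theorem partSeries_split {d : ℕ} (hd : 0 < d) (F : Multiset ℕ → ℤ) :
    partSeries F = partSeries (fun s => if d ∈ s then 0 else F s)
      + PowerSeries.X ^ d * partSeries (fun s => F (d ::ₘ s)) := by
  have h1 : partSeries (fun s => if d ∈ s then F s else 0)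
      = PowerSeries.X ^ d * partSeries (fun s => F (d ::ₘ s)) := by
    rw [partSeries_cons hd (by intro s hs; simp [hs])]
    simp
  rw [← h1, ← partSeries_add]
  congr 1
  ext s
  split_ifs <;> simp

/-! ### The total part counts -/

theorem one_sub_X_pow_ne_zero {d : ℕ} (hd : 0 < d) : (1 - PowerSeries.X ^ d : PowerSeries ℤ) ≠ 0 := by
  intro h
  have := congrArg (PowerSeries.constantCoeff (R := ℤ)) h
  simp [hd.ne'] at this

theorem one_add_X_pow_ne_zero {d : ℕ} (hd : 0 < d) : (1 + PowerSeries.X ^ d : PowerSeries ℤ) ≠ 0 := by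
  intro h
  have := congrArg (PowerSeries.constantCoeff (R := ℤ)) h
  simp [hd.ne'] at this

/-- The series `X ^ d / (1 - X ^ d) = X ^ d + X ^ (2 * d) + ⋯`. -/
noncomputable def geo (d : ℕ) : PowerSeries ℤ :=
  PowerSeries.mk fun n => if 0 < n ∧ d ∣ n then 1 else 0

theorem geo_mul {d : ℕ} (hd : 0 < d) : (1 - PowerSeries.X ^ d) * geo d = PowerSeries.X ^ d := by
  ext n
  rw [sub_mul, one_mul, map_sub, PowerSeries.coeff_X_pow_mul', PowerSeries.coeff_X_pow]
  simp only [geo, PowerSeries.coeff_mk]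
  rcases lt_trichotomy n d with h | rfl | h
  · have : ¬ (0 < n ∧ d ∣ n) := fun h' => absurd (Nat.le_of_dvd h'.1 h'.2) (by omega)
    simp [this, h.ne, h.not_ge]
  · simp [hd]
  · have : d ∣ n - d ↔ d ∣ n := (Nat.dvd_sub_iff_left h.le dvd_rfl)
    simp [this, h.le, h.ne', h, hd.trans h]

/-- Generating series of the partitions into odd parts. -/
noncomputable def oddSeries : PowerSeries ℤ :=
  partSeries fun s => if ∀ x ∈ s, ¬ Even x then 1 else 0

theorem oddSeries_eq_distinct :
    oddSeries = partSeries fun s => if s.Nodup then 1 else 0 := by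
  ext n
  have := Nat.Partition.card_odds_eq_card_distincts n
  simp only [oddSeries, coeff_partSeries, Finset.sum_boole]
  exact_mod_cast this

/-- Multiplicities of the odd number `d`, summed over the partitions into odd parts. -/
theorem odd_count {d : ℕ} (hd : ¬ Even d) :
    partSeries (fun s => if ∀ x ∈ s, ¬ Even x then (s.count d : ℤ) else 0) = oddSeries * geo d := by
  have hd0 : 0 < d := Nat.pos_of_ne_zero (by rintro rfl; simp at hd)
  apply mul_left_cancel₀ (one_sub_X_pow_ne_zero hd0)
  rw [mul_left_comm, geo_mul hd0, sub_mul, one_mul]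
  conv_lhs => enter [1]; rw [partSeries_cons hd0 (by intro s hs; simp [hs])]
  rw [← mul_sub, mul_comm]
  congr 1
  rw [sub_eq_iff_eq_add, oddSeries, ← partSeries_add]
  congr 1
  ext s
  by_cases h : ∀ x ∈ s, ¬ Even x
  · have : ∀ x ∈ d ::ₘ s, ¬ Even x := Multiset.forall_mem_cons.2 ⟨hd, h⟩
    rw [if_pos h, if_pos h, if_pos this]; simp [add_comm]
  · have : ¬ ∀ x ∈ d ::ₘ s, ¬ Even x := fun h' => h fun x hx => h' x (Multiset.mem_cons_of_mem hx)
    rw [if_neg h, if_neg h, if_neg this]; simp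

/-- Multiplicities of `d`, summed over the partitions into distinct parts; here
`X ^ d / (1 + X ^ d)` is written as `geo d - 2 * geo (2 * d)`. -/
theorem distinct_count {d : ℕ} (hd : 0 < d) :
    partSeries (fun s => if s.Nodup then (s.count d : ℤ) else 0)
      = oddSeries * (geo d - 2 * geo (2 * d)) := by
  have hgeo : (1 + PowerSeries.X ^ d) * (geo d - 2 * geo (2 * d)) = PowerSeries.X ^ d := by
    apply mul_left_cancel₀ (one_sub_X_pow_ne_zero hd)
    have h1 := geo_mul hd
    have h2 := geo_mul (d := 2 * d) (by omega)
    rw [mul_comm 2 d, pow_mul] at h2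
    rw [mul_comm 2 d]
    linear_combination (1 + PowerSeries.X ^ d) * h1 - 2 * h2
  apply mul_left_cancel₀ (one_add_X_pow_ne_zero hd)
  rw [mul_left_comm, hgeo, add_mul, one_mul]
  conv_lhs => enter [1]; rw [partSeries_cons hd (by intro s hs; simp [hs])]
  rw [← mul_add, mul_comm, oddSeries_eq_distinct, ← partSeries_add]
  congr 2
  ext s
  by_cases h : d ∈ s
  · by_cases hn : s.Nodup
    · simp [h, hn]
    · simp [h, hn]
  · by_cases hn : s.Nodup <;> simp [h, hn]

theorem card_eq_sum_count {N n : ℕ} (h : n ≤ N) (p : Nat.Partition n) :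
    (Multiset.card p.parts : ℤ) = ∑ d ∈ Finset.Icc 1 N, (p.parts.count d : ℤ) := by
  rw [← Multiset.sum_count_eq_card (s := Finset.Icc 1 N)]
  · push_cast; rfl
  · intro a ha
    have := p.parts_pos ha
    have := p.le_of_mem_parts ha
    simp; omega

/-- A truncation, valid up to degree `N` after multiplication by `oddSeries`, of the quotient of
the generating series of `b` by `oddSeries`. The first term of each summand comes from partitions
into odd parts, the second from partitions into distinct parts. -/
noncomputable def bFactor (N : ℕ) : PowerSeries ℤ :=
  ∑ d ∈ Finset.Icc 1 N, ((if Even d then 0 else geo d) - (geo d - 2 * geo (2 * d)))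

theorem b_eq {N n : ℕ} (h : n ≤ N) : b n = PowerSeries.coeff n (oddSeries * bFactor N) := by
  have h1 : (oddPartsTotal n : ℤ) = ∑ d ∈ Finset.Icc 1 N,
      PowerSeries.coeff n (oddSeries * (if Even d then 0 else geo d)) := by
    have : ∀ d, oddSeries * (if Even d then 0 else geo d)
        = partSeries (fun s => if ∀ x ∈ s, ¬ Even x then (s.count d : ℤ) else 0) := by
      intro d
      split_ifs with hd
      · rw [mul_zero]
        ext n
        rw [coeff_partSeries]
        simp only [map_zero]
        symm
        refine Finset.sum_eq_zero fun p _ => ?_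
        split_ifs with hp
        · simpa using fun hm => hp _ hm hd
        · rfl
      · rw [odd_count hd]
    simp only [this, coeff_partSeries]
    rw [Finset.sum_comm]
    simp only [oddPartsTotal, Nat.Partition.odds, Nat.Partition.restricted]
    push_cast
    rw [Finset.sum_filter]
    refine Finset.sum_congr rfl fun p _ => ?_
    split_ifs
    · exact card_eq_sum_count h p
    · simp
  have h2 : (distinctPartsTotal n : ℤ) = ∑ d ∈ Finset.Icc 1 N,
      PowerSeries.coeff n (oddSeries * (geo d - 2 * geo (2 * d))) := by
    have : ∀ d ∈ Finset.Icc 1 N, PowerSeries.coeff n (oddSeries * (geo d - 2 * geo (2 * d)))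
        = PowerSeries.coeff n
          (partSeries (fun s => if s.Nodup then (s.count d : ℤ) else 0)) := by
      intro d hd
      rw [distinct_count (Finset.mem_Icc.1 hd).1]
    rw [Finset.sum_congr rfl this]
    simp only [coeff_partSeries]
    rw [Finset.sum_comm]
    simp only [distinctPartsTotal, Nat.Partition.distincts]
    push_cast
    rw [Finset.sum_filter]
    refine Finset.sum_congr rfl fun p _ => ?_
    split_ifs
    · exact card_eq_sum_count h p
    · simp
  rw [b, if_pos (by positivity), Int.toNat_natCast, h1, h2, ← Finset.sum_sub_distrib, bFactor,
    Finset.mul_sum, map_sum]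
  simp only [← map_sub, mul_sub]

theorem coeff_geo_nonneg (d n : ℕ) : 0 ≤ PowerSeries.coeff n (geo d) := by
  simp only [geo, PowerSeries.coeff_mk]; split_ifs <;> simp

/-- The terms `geo d` with `d` odd cancel in `bFactor`, and each remaining `-geo d` with `d` even is
absorbed by one of the two copies of `geo (2 * (d / 2))`. -/
theorem coeff_bFactor_nonneg (N n : ℕ) : 0 ≤ PowerSeries.coeff n (bFactor N) := by
  have h1 : bFactor N = 2 * (∑ d ∈ Finset.Icc 1 N, geo (2 * d))
      - ∑ d ∈ (Finset.Icc 1 N).filter Even, geo d := by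
    rw [bFactor, Finset.mul_sum, Finset.sum_filter, ← Finset.sum_sub_distrib]
    refine Finset.sum_congr rfl fun d _ => ?_
    split_ifs <;> ring
  have h2 : ∑ d ∈ (Finset.Icc 1 N).filter Even, PowerSeries.coeff n (geo d)
      ≤ ∑ d ∈ Finset.Icc 1 N, PowerSeries.coeff n (geo (2 * d)) := by
    rw [← Finset.sum_image (s := Finset.Icc 1 N) (g := fun d => 2 * d)
      (f := fun d => PowerSeries.coeff n (geo d)) (by intro a _ b _ h; simpa using h)]
    refine Finset.sum_le_sum_of_subset_of_nonneg ?_ fun d _ _ => coeff_geo_nonneg d n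
    intro d hd
    simp only [Finset.mem_filter, Finset.mem_Icc, Finset.mem_image] at hd ⊢
    obtain ⟨hd, c, rfl⟩ := hd
    exact ⟨c, by omega, by omega⟩
  have h3 : 0 ≤ ∑ d ∈ Finset.Icc 1 N, PowerSeries.coeff n (geo (2 * d)) :=
    Finset.sum_nonneg fun d _ => coeff_geo_nonneg _ n
  rw [h1, two_mul, map_sub, map_add, map_sum, map_sum]
  linarith

/-! ### Partitions with distinct odd parts, counted with sign -/

/-- `(-1)` to the number of odd parts. -/
def oddSign (s : Multiset ℕ) : ℤ := (-1) ^ Multiset.card (s.filter Odd)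

theorem oddSign_cons_odd {d : ℕ} (hd : Odd d) (s : Multiset ℕ) :
    oddSign (d ::ₘ s) = - oddSign s := by
  simp [oddSign, hd, pow_succ]

theorem oddSign_cons_even {d : ℕ} (hd : Even d) (s : Multiset ℕ) :
    oddSign (d ::ₘ s) = oddSign s := by
  simp [oddSign, Nat.not_odd_iff_even.2 hd]

theorem oddSign_eq (s : Multiset ℕ) : oddSign s = (-1) ^ s.sum := by
  induction s using Multiset.induction_on with
  | empty => simp [oddSign]
  | cons a s ih =>
    rw [Multiset.sum_cons, pow_add, ← ih]
    rcases Nat.even_or_odd a with h | h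
    · rw [oddSign_cons_even h, h.neg_one_pow, one_mul]
    · rw [oddSign_cons_odd h, h.neg_one_pow, neg_one_mul]

/-- Parts at most `M`, odd parts distinct. -/
def OddDistinctLE (M : ℕ) (s : Multiset ℕ) : Prop :=
  ∀ x ∈ s, x ≤ M ∧ (Odd x → s.count x ≤ 1)

/-- Signed generating series of the partitions into parts at most `M` with distinct odd parts. -/
noncomputable def signedSeries (M : ℕ) : PowerSeries ℤ :=
  open Classical in partSeries fun s => if OddDistinctLE M s then oddSign s else 0

theorem signedSeries_odd (m : ℕ) :
    signedSeries (2 * m + 1) = (1 - PowerSeries.X ^ (2 * m + 1)) * signedSeries (2 * m) := by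
  classical
  have ho : Odd (2 * m + 1) := ⟨m, rfl⟩
  rw [sub_mul, one_mul, sub_eq_add_neg, ← mul_neg]
  unfold signedSeries
  rw [← partSeries_neg, partSeries_split (Nat.succ_pos (2 * m))]
  congr 2
  · ext s
    unfold OddDistinctLE
    by_cases h : 2 * m + 1 ∈ s
    · rw [if_pos h, if_neg]
      intro h'
      have := (h' _ h).1
      omega
    · rw [if_neg h]
      congr 1
      grind
  · congr 1
    ext s
    rw [Nat.succ_eq_add_one, oddSign_cons_odd ho]
    have : OddDistinctLE (2 * m + 1) ((2 * m + 1) ::ₘ s) ↔ OddDistinctLE (2 * m) s := by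
      unfold OddDistinctLE
      constructor
      · intro h x hx
        have h0 := (h (2 * m + 1) (Multiset.mem_cons_self _ _)).2 ho
        rw [Multiset.count_cons_self] at h0
        have h1 := h x (Multiset.mem_cons_of_mem hx)
        have hne : x ≠ 2 * m + 1 := by
          rintro rfl
          have := Multiset.count_pos.2 hx
          omega
        rw [Multiset.count_cons_of_ne hne] at h1
        exact ⟨by omega, h1.2⟩
      · intro h x hx
        rcases Multiset.mem_cons.1 hx with rfl | hx
        · refine ⟨le_rfl, fun _ => ?_⟩
          rw [Multiset.count_cons_self, Multiset.count_eq_zero_of_notMem]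
          intro h'
          have := (h _ h').1
          omega
        · have h1 := h x hx
          have hne : x ≠ 2 * m + 1 := by omega
          rw [Multiset.count_cons_of_ne hne]
          exact ⟨by omega, h1.2⟩
    simp only [this]
    split_ifs <;> simp

theorem signedSeries_even (m : ℕ) :
    (1 - PowerSeries.X ^ (2 * m + 2)) * signedSeries (2 * m + 2) = signedSeries (2 * m + 1) := by
  classical
  have he : Even (2 * m + 2) := ⟨m + 1, by ring⟩
  rw [sub_mul, one_mul, sub_eq_iff_eq_add]
  unfold signedSeries
  conv_lhs => rw [partSeries_split (Nat.succ_pos (2 * m + 1))]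
  congr 2
  · ext s
    unfold OddDistinctLE
    by_cases h : 2 * m + 2 ∈ s
    · rw [if_pos h, if_neg]
      intro h'
      have := (h' _ h).1
      omega
    · rw [if_neg h]
      congr 1
      grind
  · congr 1
    ext s
    rw [Nat.succ_eq_add_one, oddSign_cons_even he]
    have : OddDistinctLE (2 * m + 2) ((2 * m + 2) ::ₘ s) ↔ OddDistinctLE (2 * m + 2) s := by
      unfold OddDistinctLE
      have hc : ∀ x, Odd x → ((2 * m + 2) ::ₘ s).count x = s.count x := fun x hx =>
        Multiset.count_cons_of_ne (by rintro rfl; exact Nat.not_odd_iff_even.2 he hx) _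
      constructor
      · intro h x hx
        have h1 := h x (Multiset.mem_cons_of_mem hx)
        exact ⟨h1.1, fun ho => hc x ho ▸ h1.2 ho⟩
      · intro h x hx
        rcases Multiset.mem_cons.1 hx with rfl | hx
        · exact ⟨le_rfl, fun ho => absurd he (Nat.not_even_iff_odd.2 ho)⟩
        · exact ⟨(h x hx).1, fun ho => (hc x ho).symm ▸ (h x hx).2 ho⟩
    simp only [this]

/-- Generating series of the partitions into parts lying in `A`. -/
noncomputable def restrictedSeries (A : Set ℕ) : PowerSeries ℤ :=
  open Classical in partSeries fun s => if ∀ x ∈ s, x ∈ A then 1 else 0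

theorem coeff_restrictedSeries_nonneg (A : Set ℕ) (n : ℕ) :
    0 ≤ PowerSeries.coeff n (restrictedSeries A) := by
  rw [restrictedSeries, coeff_partSeries]
  refine Finset.sum_nonneg fun p _ => ?_
  split_ifs <;> simp

/-- Multiplication by `1 - X ^ d` removes `d` from the allowed parts. -/
theorem restrictedSeries_mul {A B : Set ℕ} {d : ℕ} (hd : 0 < d)
    (hA : d ∈ A) (hB : ∀ x, x ∈ B ↔ x ∈ A ∧ x ≠ d) :
    (1 - PowerSeries.X ^ d) * restrictedSeries A = restrictedSeries B := by
  classical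
  rw [sub_mul, one_mul, sub_eq_iff_eq_add]
  unfold restrictedSeries
  conv_lhs => rw [partSeries_split hd]
  congr 2
  · ext s
    by_cases h : d ∈ s
    · rw [if_pos h, if_neg]
      intro h'
      exact ((hB d).1 (h' d h)).2 rfl
    · rw [if_neg h]
      congr 1
      simp only [hB, eq_iff_iff]
      exact ⟨fun h' x hx => ⟨h' x hx, by rintro rfl; exact h hx⟩, fun h' x hx => (h' x hx).1⟩
  · simp [hA]

/-- Odd numbers greater than `2 * m` together with even numbers at most `2 * m`. -/
def mixedParts (m : ℕ) : Set ℕ := {x | (Odd x ∧ 2 * m < x) ∨ (Even x ∧ x ≤ 2 * m)}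

/-- The distinct odd parts below `2 * m` cancel, with sign, against the same parts of a partition
into odd parts. -/
theorem oddSeries_mul_signedSeries (m : ℕ) :
    oddSeries * signedSeries (2 * m) = restrictedSeries (mixedParts m) := by
  classical
  induction m with
  | zero =>
    have h1 : signedSeries (2 * 0) = 1 := by
      ext n
      rw [signedSeries, coeff_partSeries]
      have key : ∀ s : Multiset ℕ, (∀ x ∈ s, 0 < x) →
          ((if OddDistinctLE (2 * 0) s then oddSign s else 0) = if s = 0 then 1 else 0) := by
        intro s hs
        by_cases h : s = 0
        · subst h; simp [OddDistinctLE, oddSign]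
        · obtain ⟨x, hx⟩ := Multiset.exists_mem_of_ne_zero h
          rw [if_neg h, if_neg]
          intro h'
          have := (h' x hx).1
          have := hs x hx
          omega
      rw [Finset.sum_congr rfl fun p _ => key p.parts fun x hx => p.parts_pos hx,
        PowerSeries.coeff_one]
      rcases Nat.eq_zero_or_pos n with rfl | hn
      · simp
      · rw [if_neg hn.ne']
        refine Finset.sum_eq_zero fun p _ => if_neg fun h => ?_
        have := p.parts_sum
        simp [h] at this
        omega
    rw [h1, mul_one]
    refine partSeries_congr fun s hs => ?_
    congr 1
    simp only [mixedParts, Set.mem_ofPred_eq, eq_iff_iff, Nat.not_even_iff_odd]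
    refine forall₂_congr fun x hx => ?_
    have := hs x hx
    constructor
    · intro h; exact Or.inl ⟨h, by omega⟩
    · rintro (h | h)
      · exact h.1
      · omega
  | succ m ih =>
    apply mul_left_cancel₀ (one_sub_X_pow_ne_zero (d := 2 * m + 2) (by omega))
    rw [mul_left_comm, show 2 * (m + 1) = 2 * m + 2 by ring, signedSeries_even, signedSeries_odd,
      mul_left_comm, ih]
    rw [restrictedSeries_mul (B := mixedParts m \ {2 * m + 1}) (by omega),
      restrictedSeries_mul (by omega)]
    · simp [mixedParts, parity_simps]; try omega
    · intro x
      simp only [mixedParts, Set.mem_sdiff, Set.mem_ofPred_eq, Set.mem_singleton_iff]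
      simp only [Nat.even_iff, Nat.odd_iff]
      omega
    · simp [mixedParts]
    · intro x; simp

/-! ### The partitions counted by `MP` -/

/-- No part exceeds `L`, the part `L` occurs exactly `i` times, and the other odd parts are
distinct. -/
def TopCount (L i : ℕ) (s : Multiset ℕ) : Prop :=
  s.count L = i ∧ ∀ x ∈ s, x ≤ L ∧ (x ≠ L → Odd x → s.count x ≤ 1)

/-- Generating series of the partitions satisfying `TopCount L i`, signed by `oddSign`. -/
noncomputable def topSeries (L i : ℕ) : PowerSeries ℤ :=
  open Classical in partSeries fun s => if TopCount L i s then oddSign s else 0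

theorem topSeries_eq (m i : ℕ) : topSeries (2 * m + 1) i
    = (-1) ^ i * PowerSeries.X ^ (i * (2 * m + 1)) * signedSeries (2 * m) := by
  classical
  induction i with
  | zero =>
    simp only [zero_mul, pow_zero, one_mul]
    unfold topSeries signedSeries
    congr 1
    ext s
    congr 1
    simp only [TopCount, OddDistinctLE, eq_iff_iff, Multiset.count_eq_zero]
    constructor
    · rintro ⟨h, h'⟩ x hx
      have hne : x ≠ 2 * m + 1 := by rintro rfl; exact h hx
      exact ⟨by have := (h' x hx).1; omega, (h' x hx).2 hne⟩
    · intro h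
      refine ⟨fun hm => by have := (h _ hm).1; omega, fun x hx => ?_⟩
      exact ⟨by have := (h x hx).1; omega, fun _ => (h x hx).2⟩
  | succ i ih =>
    have : topSeries (2 * m + 1) (i + 1)
        = PowerSeries.X ^ (2 * m + 1) * - topSeries (2 * m + 1) i := by
      unfold topSeries
      rw [partSeries_cons (Nat.succ_pos (2 * m)), ← partSeries_neg]
      · congr 2
        ext s
        rw [Nat.succ_eq_add_one, oddSign_cons_odd ⟨m, rfl⟩]
        have : TopCount (2 * m + 1) (i + 1) ((2 * m + 1) ::ₘ s) ↔ TopCount (2 * m + 1) i s := by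
          simp only [TopCount, Multiset.count_cons_self, Nat.add_right_cancel_iff,
            Multiset.mem_cons, forall_eq_or_imp, le_refl, ne_eq, not_true_eq_false,
            false_implies, and_self, true_and]
          refine and_congr_right fun _ => forall₂_congr fun x _ => and_congr_right fun _ =>
            forall_congr' fun hne => ?_
          rw [Multiset.count_cons_of_ne hne]
        simp only [this]
        split_ifs <;> simp
      · intro s hs
        rw [if_neg]
        rintro ⟨h, -⟩
        rw [Multiset.count_eq_zero_of_notMem hs] at h
        omega
    rw [this, ih]
    ring

/-- For `k > 0` the parts satisfying `TopCount (2 * m + 1) k` have maximum `2 * m + 1`, so the sum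
over `m` sorts the partitions counted by `MP k j` by largest part; the sign is `(-1) ^ j` because
the number of odd parts has the parity of `j`. -/
theorem MP_eq {k N j : ℕ} (hk : 0 < k) (hj : j ≤ N) :
    (-1 : ℤ) ^ j * (MP k j : ℤ)
      = PowerSeries.coeff j (∑ m ∈ Finset.Icc k N, topSeries (2 * m + 1) k) := by
  classical
  simp only [map_sum, topSeries, coeff_partSeries]
  rw [Finset.sum_comm, MP, Finset.card_filter]
  push_cast
  rw [Finset.mul_sum]
  refine Finset.sum_congr rfl fun p _ => ?_
  have hsup : ∀ m, TopCount (2 * m + 1) k p.parts → p.parts.sup = 2 * m + 1 := by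
    rintro m ⟨h1, h2⟩
    refine le_antisymm (Multiset.sup_le.2 fun x hx => (h2 x hx).1) (Multiset.le_sup ?_)
    exact Multiset.count_pos.1 (by omega)
  rw [oddSign_eq, p.parts_sum]
  split_ifs with h
  · obtain ⟨h1, ⟨m, hm⟩, h3, h4⟩ := h
    have hle : p.parts.sup ≤ j := Multiset.sup_le.2 fun x hx => p.le_of_mem_parts hx
    rw [Finset.sum_eq_single m, if_pos, mul_one]
    · rw [hm] at h3 h4
      refine ⟨h3, fun x hx => ⟨hm ▸ Multiset.le_sup hx, h4 x hx⟩⟩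
    · intro m' _ hne
      rw [if_neg]
      intro h'
      have := hsup m' h'
      omega
    · intro hm'
      simp only [Finset.mem_Icc] at hm'
      omega
  · rw [mul_zero]
    symm
    refine Finset.sum_eq_zero fun m hm => if_neg fun h' => h ?_
    have hs := hsup m h'
    rw [hs]
    simp only [Finset.mem_Icc] at hm
    exact ⟨by omega, ⟨m, rfl⟩, h'.1, fun x hx => (h'.2 x hx).2⟩

theorem coeff_mul_nonneg {f g : PowerSeries ℤ} (hf : ∀ n, 0 ≤ PowerSeries.coeff n f)
    (hg : ∀ n, 0 ≤ PowerSeries.coeff n g) (n : ℕ) : 0 ≤ PowerSeries.coeff n (f * g) := by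
  rw [PowerSeries.coeff_mul]
  exact Finset.sum_nonneg fun x _ => mul_nonneg (hf _) (hg _)

/-- `(-1)^k ∑_{j=0}^{n} (-1)^j b(n-j) MP_k(j) ≥ 0`. -/
theorem statement13 (k n : ℕ) (hk : 0 < k) (hn : 0 < n) :
    0 ≤ (-1 : ℤ) ^ k *
        ∑ j ∈ Finset.range (n + 1), (-1 : ℤ) ^ j * b ((n : ℤ) - j) * (MP k j : ℤ) := by
  have h1 : ∑ j ∈ Finset.range (n + 1), (-1 : ℤ) ^ j * b ((n : ℤ) - j) * (MP k j : ℤ)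
      = PowerSeries.coeff n ((∑ m ∈ Finset.Icc k n, topSeries (2 * m + 1) k)
          * (oddSeries * bFactor n)) := by
    rw [PowerSeries.coeff_mul, Finset.Nat.sum_antidiagonal_eq_sum_range_succ_mk]
    refine Finset.sum_congr rfl fun j hj => ?_
    have hj' : j ≤ n := by simpa [Nat.lt_succ_iff] using hj
    rw [← MP_eq hk hj', ← b_eq (Nat.sub_le n j), Nat.cast_sub hj']
    ring
  have h2 : (-1 : PowerSeries ℤ) ^ k * ((∑ m ∈ Finset.Icc k n, topSeries (2 * m + 1) k)
        * (oddSeries * bFactor n))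
      = ∑ m ∈ Finset.Icc k n, PowerSeries.X ^ (k * (2 * m + 1))
          * (restrictedSeries (mixedParts m) * bFactor n) := by
    rw [Finset.sum_mul, Finset.mul_sum]
    refine Finset.sum_congr rfl fun m _ => ?_
    have hs : (-1 : PowerSeries ℤ) ^ k * (-1) ^ k = 1 := by rw [← mul_pow]; simp
    rw [topSeries_eq, ← oddSeries_mul_signedSeries]
    linear_combination PowerSeries.X ^ (k * (2 * m + 1)) * signedSeries (2 * m) * oddSeries
      * bFactor n * hs
  have h3 : (-1 : PowerSeries ℤ) ^ k = PowerSeries.C ((-1 : ℤ) ^ k) := by simp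
  rw [h1, ← PowerSeries.coeff_C_mul, ← h3, h2, map_sum]
  refine Finset.sum_nonneg fun m _ => coeff_mul_nonneg (fun i => ?_)
    (coeff_mul_nonneg (coeff_restrictedSeries_nonneg _) (coeff_bFactor_nonneg n)) n
  rw [PowerSeries.coeff_X_pow]
  split_ifs <;> simp
end

section
/- For every positive integer n, S(n) = Σ_{k=0}^{2n} (−1)^k e(k) · b(2n−k), where e(k) is the number of partitions of k in which each even part occurs with even multiplicity (and odd parts are unrestricted), with e(0)=1. -/
/-!
The proof is an identity of generating functions over the dual numbers `ℤ[ε]`, `ε² = 0`. Give a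
partition the weight `z ^ (number of parts)` with `z = 1 + ε`; since `z ^ c = 1 + c ε`, the real
part of a weighted count is the plain count and its `ε`-part is the total number of parts. Let
`O_z`, `Q_z`, `V_z` be the generating functions of the partitions with odd, distinct and even parts,
so that `V_z` counts, at `q ^ (2n)`, the partitions of `n`. Then
`Q_z = ∏ (1 + z q^i) = ∏ (1 - z² q^(2i)) / ∏ (1 - z q^i) = O_z V_z ∏ (1 - z² q^(2i))`.
As `(z - 1)² = 0` gives `(1 - z x)² = (1 - x) (1 - z² x)`, this yields
`Q_z V_z = O_z V_1` (`distinct_mul_even`).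

If `E` is the generating function of `(-1)^k e(k)`, comparing factors gives `E Q_1 = V_1`
(`signed_mul_distinct`). Hence
`E (O_z - Q_z) V_1 = E Q_z (V_z - V_1) = E Q_1 (V_z - V_1) = V_1 (V_z - V_1)`, where `Q_z` may be
replaced by `Q_1` because both differences have coefficients in `ε ℤ`. Cancelling `V_1` gives
`E (O_z - Q_z) = V_z - V_1`, and the claim is the `ε`-part of its coefficient at `2n`.
-/


open Nat Finset

namespace PartsCount

open PowerSeries Nat.Partition
open scoped PowerSeries.WithPiTopology

/-! ### Multiplicative weights on partitions -/

section Weights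

variable {R : Type*} [CommRing R]

/-- Weight of `c` copies of the part `i`: odd parts only, each part weighted by `z`. -/
def wOdd (z : R) (i c : ℕ) : R := if Even i then 0 else z ^ c

/-- Even parts only, each part weighted by `z`. -/
def wEven (z : R) (i c : ℕ) : R := if Even i then z ^ c else 0

/-- All parts allowed, each part weighted by `z`. -/
def wAll (z : R) (_i c : ℕ) : R := z ^ c

/-- Distinct parts, each part weighted by `z`. -/
def wDistinct (z : R) (_i c : ℕ) : R := if c = 1 then z else 0

/-- Distinct even parts, each part weighted by `-z ^ 2`; the generating function is
`∏ (1 - z² q^(2i))`. -/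
def wCorr (z : R) (i c : ℕ) : R := if Even i then (if c = 1 then -z ^ 2 else 0) else 0

/-- Even parts have even multiplicity, odd parts are weighted by `-1`; a partition of `k` of this
kind has total weight `(-1) ^ k`. -/
def wSigned (i c : ℕ) : R := if Even i then (if Even c then 1 else 0) else (-1) ^ c

end Weights

/-! ### Euler products and their identities -/

section Product

variable {R : Type*} [CommRing R] [TopologicalSpace R]

/-- The Euler factor at the part `i` of the generating function `genFun f`. -/
noncomputable def factor (f : ℕ → ℕ → R) (i : ℕ) : R⟦X⟧ :=
  1 + ∑' j, f i (j + 1) • (X : R⟦X⟧) ^ (i * (j + 1))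

lemma factor_congr {f g : ℕ → ℕ → R} {i : ℕ} (h : ∀ c, f i c = g i c) :
    factor f i = factor g i := by
  simp only [factor, h]

lemma factor_eq_one {f : ℕ → ℕ → R} {i : ℕ} (h : ∀ c, f i c = 0) : factor f i = 1 := by
  simp [factor, h]

lemma factor_single {f : ℕ → ℕ → R} {i : ℕ} (a : R) (h : ∀ c, f i c = if c = 1 then a else 0) :
    factor f i = 1 + C a * X ^ i := by
  rw [factor, tsum_eq_single 0]
  · simp [h, smul_eq_C_mul]
  · intro j hj
    simp [h, hj]

lemma factor_corr_even (z : R) {i : ℕ} (hi : Even i) :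
    factor (wCorr z) i = 1 - C (z ^ 2) * X ^ i := by
  rw [factor_single (-z ^ 2) (by simp [wCorr, hi])]
  simp only [map_neg]
  ring

variable [T2Space R]

lemma hasProd_factor (f : ℕ → ℕ → R) : HasProd (fun i ↦ factor f (i + 1)) (genFun f) :=
  hasProd_genFun f

/-- `∏ (1 - z² q^(2i))`, as a product over all `i` rather than over the even parts `2i`. -/
lemma hasProd_corr (z : R) :
    HasProd (fun i : ℕ ↦ 1 - C (z ^ 2) * (X : R⟦X⟧) ^ (2 * (i + 1))) (genFun (wCorr z)) := by
  have hinj : Function.Injective (fun k : ℕ ↦ 2 * k + 1) := fun a b hab ↦ by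
    simpa using hab
  have h := (hinj.hasProd_iff (f := fun i ↦ factor (wCorr z) (i + 1)) (a := genFun (wCorr z))
    ?_).2 (hasProd_factor _)
  · convert! h using 2 with i
    exact (factor_corr_even z ⟨i + 1, by ring⟩).symm
  · intro i hi
    have : ¬ Even (i + 1) := by
      rintro ⟨r, hr⟩
      exact hi ⟨r - 1, by simp only; omega⟩
    exact factor_eq_one (by simp [wCorr, this])

variable [IsTopologicalRing R]

lemma factor_pow {f : ℕ → ℕ → R} {i : ℕ} (hi : i ≠ 0) (a : R) (h : ∀ c, f i c = a ^ c) :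
    factor f i * (1 - C a * X ^ i) = 1 := by
  have h0 : (C a * X ^ i : R⟦X⟧).constantCoeff = 0 := by simp [hi]
  have hs := WithPiTopology.summable_pow_of_constantCoeff_eq_zero h0
  have : factor f i = ∑' j, (C a * X ^ i : R⟦X⟧) ^ j := by
    rw [tsum_eq_zero_add' ((summable_nat_add_iff 1).2 hs), factor]
    simp [h, smul_eq_C_mul, mul_pow, pow_mul]
  rw [this]
  exact WithPiTopology.tsum_pow_mul_one_sub_of_constantCoeff_eq_zero h0

lemma factor_even_count {f : ℕ → ℕ → R} {i : ℕ} (hi : i ≠ 0)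
    (h : ∀ c, f i c = if Even c then 1 else 0) :
    factor f i * (1 - X ^ (2 * i)) = 1 := by
  have h0 : (X ^ (2 * i) : R⟦X⟧).constantCoeff = 0 := by simp [hi]
  have hs := WithPiTopology.summable_pow_of_constantCoeff_eq_zero h0
  have : factor f i = ∑' j, (X ^ (2 * i) : R⟦X⟧) ^ j := by
    rw [tsum_eq_zero_add' ((summable_nat_add_iff 1).2 hs), factor, pow_zero]
    congr 1
    have hinj : Function.Injective (fun k : ℕ ↦ 2 * k + 1) := fun a b hab ↦ by
      simpa using hab
    rw [← hinj.tsum_eq]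
    · refine tsum_congr fun k ↦ ?_
      have : Even (2 * k + 1 + 1) := ⟨k + 1, by ring⟩
      rw [h, if_pos this, one_smul, ← pow_mul]
      congr 1
      ring
    · intro j hj
      have : Even (j + 1) := by
        by_contra hc
        exact hj (by simp [h, hc])
      obtain ⟨r, hr⟩ := this
      exact ⟨r - 1, by simp only; omega⟩
  rw [this]
  exact WithPiTopology.tsum_pow_mul_one_sub_of_constantCoeff_eq_zero h0

lemma genFun_mul_eq {f g h : ℕ → ℕ → R}
    (H : ∀ i, i ≠ 0 → factor f i * factor g i = factor h i) :
    genFun f * genFun g = genFun h := by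
  refine ((hasProd_factor f).mul (hasProd_factor g)).unique ?_
  simp_rw [H _ (Nat.succ_ne_zero _)]
  exact hasProd_factor h

lemma odd_mul_even (z : R) : genFun (wOdd z) * genFun (wEven z) = genFun (wAll z) := by
  refine genFun_mul_eq fun i _ ↦ ?_
  by_cases h : Even i
  · rw [factor_eq_one (f := wOdd z) (by simp [wOdd, h]), one_mul]
    exact factor_congr (by simp [wEven, wAll, h])
  · rw [factor_eq_one (f := wEven z) (by simp [wEven, h]), mul_one]
    exact factor_congr (by simp [wOdd, wAll, h])

/-- `∏ (1 - z² q^(2i)) / ∏ (1 - z q^i) = ∏ (1 + z q^i)`. -/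
lemma all_mul_corr (z : R) :
    genFun (wAll z) * genFun (wCorr z) = genFun (wDistinct z) := by
  refine ((hasProd_factor (wAll z)).mul (hasProd_corr z)).unique ?_
  convert! hasProd_factor (wDistinct z) using 2 with i
  have h1 := factor_pow (f := wAll z) (Nat.succ_ne_zero i) z (fun _ ↦ rfl)
  rw [factor_single (f := wDistinct z) z (fun _ ↦ rfl), mul_comm 2, pow_mul, map_pow]
  rw [Nat.succ_eq_add_one] at h1
  linear_combination (1 + C z * X ^ (i + 1)) * h1

/-- The factors satisfy `(1 - z² x) / (1 - z x)² = 1 / (1 - x)` because `(z - 1)² = 0`. -/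
lemma even_mul_even_mul_corr (z : R) (hz : (z - 1) ^ 2 = 0) :
    genFun (wEven z) * (genFun (wEven z) * genFun (wCorr z)) = genFun (wEven 1) := by
  refine ((hasProd_factor _).mul ((hasProd_factor _).mul (hasProd_factor _))).unique ?_
  convert! hasProd_factor (wEven (1 : R)) using 2 with i
  by_cases h : Even (i + 1)
  · have h1 := factor_pow (f := wEven z) (Nat.succ_ne_zero i) z (by simp [wEven, h])
    have h2 := factor_pow (f := wEven (1 : R)) (Nat.succ_ne_zero i) 1 (by simp [wEven, h])
    have hz' : (C z - 1 : R⟦X⟧) ^ 2 = 0 := by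
      simpa using congrArg (C (R := R)) hz
    rw [factor_corr_even z h, map_pow]
    simp only [map_one, one_mul, Nat.succ_eq_add_one] at h1 h2
    set T := factor (wEven z) (i + 1)
    set U := factor (wEven (1 : R)) (i + 1)
    set x : R⟦X⟧ := X ^ (i + 1)
    linear_combination (-(T * T * (1 - C z ^ 2 * x))) * h2 +
      U * (T * (1 - C z * x) + 1) * h1 - T * T * U * x * hz'
  · rw [factor_eq_one (f := wEven z) (by simp [wEven, h]),
      factor_eq_one (f := wCorr z) (by simp [wCorr, h]),
      factor_eq_one (f := wEven (1 : R)) (by simp [wEven, h])]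
    simp

lemma distinct_mul_even (z : R) (hz : (z - 1) ^ 2 = 0) :
    genFun (wDistinct z) * genFun (wEven z) = genFun (wOdd z) * genFun (wEven 1) := by
  rw [← all_mul_corr, ← odd_mul_even, ← even_mul_even_mul_corr z hz]
  ring

lemma signed_mul_distinct :
    genFun (wSigned (R := R)) * genFun (wDistinct 1) = genFun (wEven 1) := by
  refine genFun_mul_eq fun i hi ↦ ?_
  rw [factor_single (f := wDistinct (1 : R)) 1 (fun _ ↦ rfl), map_one, one_mul]
  by_cases h : Even i
  · have h1 := factor_even_count (f := wSigned (R := R)) hi (by simp [wSigned, h])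
    have h2 := factor_pow (f := wEven (1 : R)) hi 1 (by simp [wEven, h])
    rw [mul_comm 2, pow_mul] at h1
    simp only [map_one, one_mul] at h2
    linear_combination (-factor (wSigned (R := R)) i * (1 + X ^ i)) * h2 +
      factor (wEven (1 : R)) i * h1
  · have h1 := factor_pow (f := wSigned (R := R)) hi (-1) (by simp [wSigned, h])
    rw [factor_eq_one (f := wEven (1 : R)) (by simp [wEven, h])]
    simp only [map_neg, map_one] at h1
    linear_combination h1

end Product

/-! ### Coefficients as weighted counts -/

section Coefficients

variable {R : Type*} [CommRing R]

lemma prod_pow_count {n : ℕ} (p : n.Partition) (z : R) :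
    ∏ i ∈ p.parts.toFinset, z ^ p.parts.count i = z ^ Multiset.card p.parts := by
  rw [Finset.prod_pow_eq_pow_sum, Multiset.toFinset_sum_count_eq]

lemma coeff_odd (z : R) (n : ℕ) :
    (genFun (wOdd z)).coeff n = ∑ p ∈ odds n, z ^ Multiset.card p.parts := by
  rw [coeff_genFun, odds, restricted, Finset.sum_filter]
  refine Finset.sum_congr rfl fun p _ ↦ ?_
  have : p.parts.toFinsupp.prod (wOdd z) =
      ∏ i ∈ p.parts.toFinset, if ¬ Even i then z ^ p.parts.count i else 0 := by
    simp [Finsupp.prod, wOdd, -Nat.not_even_iff_odd]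
  rw [this, Finset.prod_ite_zero, prod_pow_count]
  simp

lemma coeff_even (z : R) (n : ℕ) :
    (genFun (wEven z)).coeff n = ∑ p ∈ restricted n Even, z ^ Multiset.card p.parts := by
  rw [coeff_genFun, restricted, Finset.sum_filter]
  refine Finset.sum_congr rfl fun p _ ↦ ?_
  have : p.parts.toFinsupp.prod (wEven z) =
      ∏ i ∈ p.parts.toFinset, if Even i then z ^ p.parts.count i else 0 := by
    simp [Finsupp.prod, wEven]
  rw [this, Finset.prod_ite_zero, prod_pow_count]
  simp

lemma coeff_distinct (z : R) (n : ℕ) :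
    (genFun (wDistinct z)).coeff n = ∑ p ∈ distincts n, z ^ Multiset.card p.parts := by
  rw [coeff_genFun, distincts, Finset.sum_filter]
  refine Finset.sum_congr rfl fun p _ ↦ ?_
  have : p.parts.toFinsupp.prod (wDistinct z) =
      ∏ i ∈ p.parts.toFinset, if p.parts.count i = 1 then z ^ p.parts.count i else 0 := by
    simp only [Finsupp.prod, wDistinct, Multiset.toFinsupp_support, Multiset.toFinsupp_apply]
    refine Finset.prod_congr rfl fun i _ ↦ ?_
    split_ifs with h <;> simp [h]
  rw [this, Finset.prod_ite_zero, prod_pow_count]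
  refine if_congr ?_ rfl rfl
  rw [Multiset.nodup_iff_count_eq_one]
  simp

lemma coeff_signed (n : ℕ) :
    (genFun (wSigned (R := R))).coeff n = (-1) ^ n * (e n : R) := by
  rw [coeff_genFun, e, Finset.card_filter, Nat.cast_sum, Finset.mul_sum]
  refine Finset.sum_congr rfl fun p _ ↦ ?_
  have : p.parts.toFinsupp.prod (wSigned (R := R)) =
      ∏ i ∈ p.parts.toFinset,
        if Even i → Even (p.parts.count i) then (-1 : R) ^ (p.parts.count i * i) else 0 := by
    simp only [Finsupp.prod, wSigned, Multiset.toFinsupp_support, Multiset.toFinsupp_apply]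
    refine Finset.prod_congr rfl fun i _ ↦ ?_
    by_cases h : Even i
    · by_cases hc : Even (p.parts.count i) <;> simp [h, hc, (h.mul_left _).neg_one_pow]
    · simp [h, mul_comm _ i, pow_mul, (Nat.not_even_iff_odd.1 h).neg_one_pow]
  have hsum : ∑ i ∈ p.parts.toFinset, p.parts.count i * i = n := by
    conv_rhs => rw [← p.parts_sum, Finset.sum_multiset_count]
    simp
  rw [this, Finset.prod_ite_zero, Finset.prod_pow_eq_pow_sum, hsum]
  simp

/-- Doubling all parts identifies the partitions of `n` with those of `2 * n` into even parts. -/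
lemma sum_even_eq {M : Type*} [AddCommMonoid M] (n : ℕ) (f : ℕ → M) :
    ∑ p ∈ restricted (2 * n) Even, f (Multiset.card p.parts) =
      ∑ p : n.Partition, f (Multiset.card p.parts) := by
  symm
  refine Finset.sum_bij (fun p _ ↦ ⟨p.parts.map (2 * ·), ?_, ?_⟩) ?_ ?_ ?_ ?_
  · intro i hi
    obtain ⟨a, ha, rfl⟩ := Multiset.mem_map.1 hi
    have := p.parts_pos ha
    omega
  · rw [Multiset.sum_map_mul_left, Multiset.map_id', p.parts_sum]
  · intro p _
    simp [restricted]
  · intro p _ q _ h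
    have hinj : Function.Injective (fun a : ℕ ↦ 2 * a) := fun a b hab ↦ by simpa using hab
    exact Nat.Partition.ext (Multiset.map_injective hinj (congrArg Nat.Partition.parts h))
  · intro q hq
    have hq' : ∀ i ∈ q.parts, 2 * (i / 2) = i := fun i hi ↦
      Nat.two_mul_div_two_of_even ((Finset.mem_filter.1 hq).2 i hi)
    have hmap : (q.parts.map (· / 2)).map (2 * ·) = q.parts := by
      rw [Multiset.map_map]
      conv_rhs => rw [← Multiset.map_id q.parts]
      exact Multiset.map_congr rfl fun i hi ↦ hq' i hi
    refine ⟨⟨q.parts.map (· / 2), ?_, ?_⟩, Finset.mem_univ _, Nat.Partition.ext hmap⟩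
    · intro i hi
      obtain ⟨a, ha, rfl⟩ := Multiset.mem_map.1 hi
      have := q.parts_pos ha
      have := hq' a ha
      omega
    · have h := congrArg Multiset.sum hmap
      rw [Multiset.sum_map_mul_left, Multiset.map_id', q.parts_sum] at h
      omega
  · intro p _
    simp

end Coefficients

/-! ### Weights in the dual numbers -/

section Dual

open DualNumber TrivSqZeroExt

/-- The weight `1 + ε` of a part. -/
def zε : ℤ[ε] := 1 + ε

lemma zε_pow (c : ℕ) : zε ^ c = 1 + (c : ℤ[ε]) * ε := by
  induction c with
  | zero => simp
  | succ c ih =>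
    rw [pow_succ, ih, zε]
    push_cast
    linear_combination (c : ℤ[ε]) * DualNumber.eps_mul_eps (R := ℤ)

lemma fst_zε_pow (c : ℕ) : (zε ^ c).fst = 1 := by
  simp [zε_pow]

lemma snd_zε_pow (c : ℕ) : (zε ^ c).snd = c := by
  simp [zε_pow]

lemma fst_sum' {ι : Type*} (s : Finset ι) (f : ι → ℤ[ε]) :
    (∑ i ∈ s, f i).fst = ∑ i ∈ s, (f i).fst :=
  map_sum (fstHom ℤ ℤ ℤ) f s

lemma snd_sum' {ι : Type*} (s : Finset ι) (f : ι → ℤ[ε]) :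
    (∑ i ∈ s, f i).snd = ∑ i ∈ s, (f i).snd :=
  map_sum (sndHom ℤ ℤ) f s

lemma mul_eq_zero_of_fst {F G : ℤ[ε]⟦X⟧} (hF : ∀ n, (F.coeff n).fst = 0)
    (hG : ∀ n, (G.coeff n).fst = 0) : F * G = 0 := by
  ext1 n
  rw [PowerSeries.coeff_mul, map_zero]
  refine Finset.sum_eq_zero fun ij _ ↦ ?_
  ext <;> simp [hF, hG]

lemma signed_mul_sub :
    genFun (wSigned (R := ℤ[ε])) * (genFun (wOdd zε) - genFun (wDistinct zε)) =
      genFun (wEven zε) - genFun (wEven 1) := by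
  let _ : TopologicalSpace ℤ[ε] := ⊥
  have _ : DiscreteTopology ℤ[ε] := ⟨rfl⟩
  have hz : (zε - 1) ^ 2 = 0 := by
    simp [zε, pow_two]
  have h1 := distinct_mul_even zε hz
  have h2 := signed_mul_distinct (R := ℤ[ε])
  have h3 : (genFun (wDistinct zε) - genFun (wDistinct 1)) *
      (genFun (wEven zε) - genFun (wEven 1)) = 0 := by
    refine mul_eq_zero_of_fst (fun n ↦ ?_) (fun n ↦ ?_)
    · simp [-coeff_genFun, -fst_pow, coeff_distinct, fst_sum', fst_zε_pow]
    · simp [-coeff_genFun, -fst_pow, coeff_even, fst_sum', fst_zε_pow]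
  have hu : IsUnit (genFun (wEven (1 : ℤ[ε]))) := by
    rw [PowerSeries.isUnit_iff_constantCoeff, ← PowerSeries.coeff_zero_eq_constantCoeff_apply,
      coeff_even]
    simp [restricted]
  refine hu.mul_right_cancel ?_
  linear_combination (-genFun (wSigned (R := ℤ[ε]))) * h1 +
    (genFun (wEven zε) - genFun (wEven 1)) * h2 + genFun (wSigned (R := ℤ[ε])) * h3

end Dual

end PartsCount

open PartsCount in
/-- `S(n) = ∑_{k=0}^{2n} (-1)^k e(k) b(2n-k)`. -/
theorem statement14 (n : ℕ) (hn : 0 < n) :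
    (SN n : ℤ) =
      ∑ k ∈ Finset.range (2 * n + 1), (-1 : ℤ) ^ k * (e k : ℤ) * b (2 * (n : ℤ) - k) := by
  have h := congrArg (fun F ↦ (PowerSeries.coeff (2 * n) F).snd) signed_mul_sub
  simp only [PowerSeries.coeff_mul, map_sub, coeff_even, coeff_odd, coeff_distinct, coeff_signed,
    snd_sum', TrivSqZeroExt.snd_sub, snd_zε_pow, one_pow, TrivSqZeroExt.snd_one,
    Finset.sum_const_zero, sub_zero] at h
  rw [sum_even_eq n (fun c ↦ (c : ℤ)), Finset.Nat.sum_antidiagonal_eq_sum_range_succ_mk] at h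
  rw [SN, Nat.cast_sum, ← h]
  refine Finset.sum_congr rfl fun k hk ↦ ?_
  have hk' : k ≤ 2 * n := Nat.lt_succ_iff.1 (Finset.mem_range.1 hk)
  have hcast : (2 * (n : ℤ) - k) = ((2 * n - k : ℕ) : ℤ) := by
    push_cast [hk']
    ring
  have hE : ((-1 : DualNumber ℤ) ^ k * (e k : DualNumber ℤ)) =
      TrivSqZeroExt.inl ((-1) ^ k * (e k : ℤ)) := by
    ext <;> simp
  rw [hE, hcast, b, if_pos (Int.natCast_nonneg _), Int.toNat_natCast, oddPartsTotal,
    distinctPartsTotal]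
  simp [-TrivSqZeroExt.snd_pow, snd_sum', snd_zε_pow]
end

section
/- For every odd positive integer n, Σ_{j=0}^{∞} ε_j · b(n − j(j+1)/2) = 0, where ε_j = +1 if j ≡ 0 or 3 (mod 4) and ε_j = −1 if j ≡ 1 or 2 (mod 4) (equivalently ε_j = (−1)^{⌈j/2⌉}), the sum being finite since b vanishes on negative arguments and b(0)=0. Equivalently, for odd n: b(n) = b(n−1) + b(n−3) − b(n−6) − b(n−10) + b(n−15) + b(n−21) − ⋯, with the triangular numbers j(j+1)/2. -/
/-!
Write `O_z` and `D_z` for the generating functions of partitions into odd parts and into distinct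
parts, where `z` marks the number of parts. Put `P_z = ∏ (1 - z q^m)` over odd `m ≥ 1` and
`E_z = ∏ (1 - z q^m)` over even `m ≥ 2`. Then `O_z P_z = 1` and `D_z P_z E_z = E_{z²}`, hence
`O_z - D_z = O_z (1 - G_z)` with `G_z = E_{z²} / E_z` an even power series in `q`.

Take `z = 1 + ε` in the dual numbers `ℤ[ε]`. As `z ^ k = 1 + k ε`, and as there are as many partitions
into odd parts as into distinct parts, `O_z - D_z = ε ∑ b(n) q^n`. Multiples of `ε` do not
distinguish `O_z` from `O_1`, so `O_z - D_z = O_1 (1 - G_z)`.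

The signs satisfy `(-1)^⌈j/2⌉ = (-1)^(j(j+1)/2)`, so the recurrence for odd `n` says that
`ψ(-q) (O_z - D_z)` is even, where `ψ(q) = ∑ q^(j(j+1)/2)`. Gauss's identity at `-q` reads
`ψ(-q) P_{-1} = E_1`, whence `ψ(-q) O_1 = E_1 / (P_{-1} P_1)`; this is even because
`(1 + q^m) (1 - q^m) = 1 - q^(2m)`. This is `psi_mul_mem`.

Gauss's identity (`gauss`) is the limit of a finite identity of Shanks (`shanks`), which is proved by
induction with a telescoping sum.
-/

open Nat Finset

namespace OddRecurrence

open PowerSeries PowerSeries.WithPiTopology Filter Topology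

/-! ### Shanks' finite form of Gauss's identity -/

section Shanks

variable {A : Type*} [CommRing A]

/-- The step from `n` to `n + 1` in `shanks`. Writing `t i` for
`x ^ (i * (2n+1)) * ∏_{i ≤ k + 1 ≤ n} (1 - x ^ (2k+2)) * ∏_{k < i} (1 - x ^ (2k+1))`, with `t 0 = 0`,
the `i`-th summand is `t (i + 1) - t i`, because
`(1 - x^(2n+2)) x^(2i) - (1 - x^(2n+1)) = x^(2n+1) (1 - x^(2i+1)) - (1 - x^(2i))`. -/
theorem shanks_telescope (x : A) (n m : ℕ) (hm : m ≤ n) :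
    ∑ i ∈ range (m + 1), (∏ k ∈ Ico i n, (1 - x ^ (2 * k + 2))) *
      (∏ k ∈ range i, (1 - x ^ (2 * k + 1))) * x ^ (i * (2 * n + 1)) *
        ((1 - x ^ (2 * n + 2)) * x ^ (2 * i) - (1 - x ^ (2 * n + 1))) =
    (∏ k ∈ Ico m n, (1 - x ^ (2 * k + 2))) *
      (∏ k ∈ range (m + 1), (1 - x ^ (2 * k + 1))) * x ^ ((m + 1) * (2 * n + 1)) := by
  induction m with
  | zero => simp; ring
  | succ m ih =>
    rw [sum_range_succ, ih (by omega), Finset.prod_eq_prod_Ico_succ_bot (by omega : m < n),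
      prod_range_succ _ (m + 1)]
    ring

/-- Shanks' finite form of Gauss's identity for `∑ x ^ (j(j+1)/2)`: the summands with `i ≥ 1` on the
left are divisible by `x ^ (2n+1)`, so letting `n → ∞` leaves only the product at `i = 0`. -/
theorem shanks (x : A) (n : ℕ) :
    ∑ i ∈ range (n + 1), (∏ k ∈ Ico i n, (1 - x ^ (2 * k + 2))) *
      (∏ k ∈ range i, (1 - x ^ (2 * k + 1))) * x ^ (i * (2 * n + 1)) =
    (∏ k ∈ range n, (1 - x ^ (2 * k + 1))) *
      ∑ j ∈ range (2 * n + 1), x ^ (j * (j + 1) / 2) := by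
  induction n with
  | zero => simp
  | succ n ih =>
    have h := shanks_telescope x n n le_rfl
    -- Passing from `n` to `n + 1` multiplies the `i`-th summand by `(1 - x^(2n+2)) x^(2i)`.
    have hsplit : ∑ i ∈ range (n + 1), (∏ k ∈ Ico i n, (1 - x ^ (2 * k + 2))) *
        (∏ k ∈ range i, (1 - x ^ (2 * k + 1))) * x ^ (i * (2 * n + 1)) *
          ((1 - x ^ (2 * n + 2)) * x ^ (2 * i) - (1 - x ^ (2 * n + 1))) =
        ∑ i ∈ range (n + 1), (∏ k ∈ Ico i (n + 1), (1 - x ^ (2 * k + 2))) *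
          (∏ k ∈ range i, (1 - x ^ (2 * k + 1))) * x ^ (i * (2 * (n + 1) + 1)) -
        (1 - x ^ (2 * n + 1)) * ∑ i ∈ range (n + 1), (∏ k ∈ Ico i n, (1 - x ^ (2 * k + 2))) *
        (∏ k ∈ range i, (1 - x ^ (2 * k + 1))) * x ^ (i * (2 * n + 1)) := by
      rw [mul_sum, ← sum_sub_distrib]
      refine sum_congr rfl fun i hi => ?_
      rw [Finset.prod_Ico_succ_top (by simpa [Nat.lt_succ_iff] using hi)]
      ring
    rw [hsplit, ih, sub_eq_iff_eq_add] at h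
    have e1 : (2 * n + 1) * (2 * n + 1 + 1) / 2 = (n + 1) * (2 * n + 1) :=
      Nat.div_eq_of_eq_mul_left (by norm_num) (by ring)
    have e2 : (2 * n + 1 + 1) * (2 * n + 1 + 1 + 1) / 2 = (n + 1) * (2 * (n + 1) + 1) :=
      Nat.div_eq_of_eq_mul_left (by norm_num) (by ring)
    rw [sum_range_succ, h, show 2 * (n + 1) + 1 = (2 * n + 1) + 1 + 1 by ring,
      sum_range_succ _ (2 * n + 1 + 1), sum_range_succ _ (2 * n + 1), e1, e2,
      prod_range_succ _ n]
    simp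
    ring

end Shanks

/-! ### Even power series -/

section Even

variable {R : Type*} [CommRing R]

/-- The ring of even power series, i.e. those whose coefficients of odd degree vanish. -/
def evenSeries (R : Type*) [CommRing R] : Subring R⟦X⟧ where
  carrier := {f | ∀ d, Odd d → coeff d f = 0}
  mul_mem' := by
    intro f g hf hg d hd
    rw [coeff_mul]
    refine sum_eq_zero fun p hp => ?_
    rw [← mem_antidiagonal.mp hp, Nat.odd_add'] at hd
    by_cases h : Odd p.2
    · rw [hg _ h, mul_zero]
    · rw [hf p.1 (by grind), zero_mul]
  one_mem' := by
    intro d hd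
    rw [coeff_one, if_neg]
    rintro rfl
    simp at hd
  add_mem' := by
    intro f g hf hg d hd
    rw [map_add, hf d hd, hg d hd, add_zero]
  zero_mem' := by intro d _; simp
  neg_mem' := by
    intro f hf d hd
    rw [map_neg, hf d hd, neg_zero]

/-- Division by an even series with constant coefficient `1` preserves evenness. -/
theorem mem_of_mul_mem {f g : R⟦X⟧} (hg : g ∈ evenSeries R) (hg0 : constantCoeff g = 1)
    (h : f * g ∈ evenSeries R) : f ∈ evenSeries R := by
  intro d
  induction d using Nat.strong_induction_on with
  | _ d ih =>
    intro hd
    have h1 := h d hd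
    rw [coeff_mul, sum_eq_single (d, 0)] at h1
    · simpa [hg0] using h1
    · intro p hp hne
      have hp' := mem_antidiagonal.mp hp
      by_cases h2 : Odd p.2
      · rw [hg _ h2, mul_zero]
      · have : p.2 ≠ 0 := by
          intro h0
          apply hne
          ext <;> simp <;> omega
        rw [ih p.1 (by omega) (by grind), zero_mul]
    · simp

theorem X_pow_mem {m : ℕ} (hm : Even m) : (X ^ m : R⟦X⟧) ∈ evenSeries R := by
  intro d hd
  rw [coeff_X_pow, if_neg]
  rintro rfl
  grind

theorem C_mem (a : R) : (C a : R⟦X⟧) ∈ evenSeries R := by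
  intro d hd
  rw [coeff_C, if_neg]
  rintro rfl
  simp at hd

variable [TopologicalSpace R] [T2Space R]

theorem hasProd_mem {f : ℕ → R⟦X⟧} {g : R⟦X⟧} (hf : ∀ i, f i ∈ evenSeries R)
    (h : HasProd f g) : g ∈ evenSeries R := by
  intro d hd
  have h1 := (tendsto_iff_coeff_tendsto R _ _ _).mp h d
  refine tendsto_nhds_unique h1 (tendsto_const_nhds.congr fun t => ?_)
  exact ((evenSeries R).prod_mem (fun i _ => hf i) d hd).symm

end Even

/-! ### The infinite products and Gauss's identity -/

section Products

variable {R : Type*} [CommRing R] [TopologicalSpace R]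

omit [TopologicalSpace R] in
theorem tendsto_order_C_mul_X_pow (z : R) {g : ℕ → ℕ} (hg : ∀ k, k ≤ g k) :
    Tendsto (fun k => (C z * X ^ g k : R⟦X⟧).order) atTop (𝓝 ⊤) := by
  refine ENat.tendsto_nhds_top_iff_natCast_lt.mpr fun n => eventually_atTop.mpr ⟨n + 1, ?_⟩
  intro m hm
  refine lt_of_lt_of_le (b := ((n + 1 : ℕ) : ℕ∞)) (by exact_mod_cast Nat.lt_succ_self n) ?_
  refine nat_le_order _ _ fun i hi => ?_
  rw [coeff_C_mul, coeff_X_pow, if_neg (by have := hg m; omega), mul_zero]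

theorem multipliable_one_sub (z : R) {g : ℕ → ℕ} (hg : ∀ k, k ≤ g k) :
    Multipliable fun k => (1 - C z * X ^ g k : R⟦X⟧) := by
  have := multipliable_one_add_of_tendsto_order_atTop_nhds_top R
    (tendsto_order_C_mul_X_pow (-z) hg)
  simpa [sub_eq_add_neg] using this

/-- The product `∏ (1 - z X^m)` over odd `m ≥ 1`. -/
noncomputable def oddProd (z : R) : R⟦X⟧ := ∏' k, (1 - C z * X ^ (2 * k + 1))

/-- The product `∏ (1 - z X^m)` over even `m ≥ 2`. -/
noncomputable def evenProd (z : R) : R⟦X⟧ := ∏' k, (1 - C z * X ^ (2 * k + 2))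

theorem hasProd_oddProd (z : R) :
    HasProd (fun k => (1 - C z * X ^ (2 * k + 1) : R⟦X⟧)) (oddProd z) :=
  (multipliable_one_sub z fun k => by omega).hasProd

theorem hasProd_evenProd (z : R) :
    HasProd (fun k => (1 - C z * X ^ (2 * k + 2) : R⟦X⟧)) (evenProd z) :=
  (multipliable_one_sub z fun k => by omega).hasProd

variable [T2Space R] [IsTopologicalRing R]

omit [IsTopologicalRing R] in
theorem evenProd_mem (z : R) : evenProd z ∈ evenSeries R :=
  hasProd_mem (fun k => sub_mem (one_mem _) (mul_mem (C_mem z) (X_pow_mem (by grind))))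
    (hasProd_evenProd z)

/-- The factors of this product are `(1 + X^m) (1 - X^m) = 1 - X^(2m)`. -/
theorem oddProd_mul_oddProd_mem : oddProd (-1 : R) * oddProd 1 ∈ evenSeries R := by
  refine hasProd_mem (fun k => ?_) ((hasProd_oddProd (-1 : R)).mul (hasProd_oddProd 1))
  have : (1 - C (-1 : R) * X ^ (2 * k + 1)) * (1 - C 1 * X ^ (2 * k + 1)) =
      1 - X ^ (2 * (2 * k + 1)) := by
    simp only [map_neg, map_one]
    ring
  rw [this]
  exact sub_mem (one_mem _) (X_pow_mem (by simp))

omit [IsTopologicalRing R] in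
theorem constantCoeff_of_hasProd {f : ℕ → R⟦X⟧} {g : R⟦X⟧} (hf : ∀ i, constantCoeff (f i) = 1)
    (h : HasProd f g) : constantCoeff g = 1 := by
  have h1 := h.map (constantCoeff (R := R)) (continuous_constantCoeff R)
  exact h1.unique (hasProd_one.congr_fun hf)

omit [IsTopologicalRing R] in
theorem constantCoeff_oddProd (z : R) : constantCoeff (oddProd z) = 1 :=
  constantCoeff_of_hasProd (by simp) (hasProd_oddProd z)

omit [IsTopologicalRing R] in
theorem constantCoeff_evenProd (z : R) : constantCoeff (evenProd z) = 1 :=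
  constantCoeff_of_hasProd (by simp) (hasProd_evenProd z)

/-- The theta series `∑ (-X)^{j(j+1)/2}`. -/
noncomputable def psi (R : Type*) [CommRing R] [TopologicalSpace R] : R⟦X⟧ :=
  ∑' j : ℕ, (-X) ^ (j * (j + 1) / 2)

omit [T2Space R] [IsTopologicalRing R] in
theorem hasSum_psi : HasSum (fun j : ℕ => (-X : R⟦X⟧) ^ (j * (j + 1) / 2)) (psi R) := by
  refine Summable.hasSum (summable_of_tendsto_order_atTop_nhds_top R ?_)
  refine ENat.tendsto_nhds_top_iff_natCast_lt.mpr fun n => eventually_atTop.mpr ⟨n + 1, ?_⟩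
  intro m hm
  refine lt_of_lt_of_le (b := ((n + 1 : ℕ) : ℕ∞)) (by exact_mod_cast Nat.lt_succ_self n) ?_
  refine nat_le_order _ _ fun i hi => ?_
  have : m ≤ m * (m + 1) / 2 := by
    rw [Nat.le_div_iff_mul_le (by norm_num)]
    nlinarith
  rw [neg_pow, show ((-1 : R⟦X⟧)) ^ (m * (m + 1) / 2) = C ((-1) ^ (m * (m + 1) / 2)) by simp,
    coeff_C_mul, coeff_X_pow, if_neg (by omega), mul_zero]

/-- Gauss's identity `∏ (1 - q^(2k+1)) * ∑ q^(j(j+1)/2) = ∏ (1 - q^(2k+2))` at `q = -X`. -/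
theorem gauss : oddProd (-1 : R) * psi R = evenProd 1 := by
  have h1 : Tendsto (fun n : ℕ => (∏ k ∈ range n, (1 - C (-1 : R) * X ^ (2 * k + 1))) *
      ∑ j ∈ range (2 * n + 1), (-X : R⟦X⟧) ^ (j * (j + 1) / 2)) atTop
      (𝓝 (oddProd (-1 : R) * psi R)) := by
    refine (hasProd_oddProd (-1 : R)).tendsto_prod_nat.mul ?_
    exact hasSum_psi.tendsto_sum_nat.comp
      (tendsto_atTop_mono (fun n => by simp only [id]; omega) tendsto_id)
  refine tendsto_nhds_unique h1 ?_
  have h2 := (hasProd_evenProd (1 : R)).tendsto_prod_nat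
  rw [tendsto_iff_coeff_tendsto] at h2 ⊢
  intro d
  refine (h2 d).congr' (eventually_atTop.mpr ⟨d, fun n hn => ?_⟩)
  have hs := shanks (-X : R⟦X⟧) n
  have e1 : ∀ k : ℕ, (1 - (-X : R⟦X⟧) ^ (2 * k + 1)) = 1 - C (-1 : R) * X ^ (2 * k + 1) := by
    intro k
    rw [Odd.neg_pow (by simp)]
    simp
  have e2 : ∀ k : ℕ, (1 - (-X : R⟦X⟧) ^ (2 * k + 2)) = 1 - C (1 : R) * X ^ (2 * k + 2) := by
    intro k
    rw [Even.neg_pow (by grind)]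
    simp
  simp only [e1, e2] at hs
  beta_reduce
  rw [← hs, sum_range_succ', map_add, map_sum, sum_eq_zero, zero_add]
  · simp
  · intro i _
    -- the terms with `i ≥ 1` are divisible by `X ^ (2 * n + 1)`
    have hdvd : (X : R⟦X⟧) ^ (2 * n + 1) ∣ (-X) ^ ((i + 1) * (2 * n + 1)) := by
      refine (pow_dvd_pow X (Nat.le_mul_of_pos_left _ (Nat.succ_pos i))).trans ?_
      rw [neg_pow]
      exact dvd_mul_left _ _
    exact X_pow_dvd_iff.mp (hdvd.mul_left _) d (by omega)

end Products

/-! ### Generating functions with the number of parts marked -/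

section Partitions

variable {R : Type*} [CommRing R]

/-- The generating function of partitions into odd parts, `z` marking the number of parts. -/
noncomputable def oddGen (z : R) : R⟦X⟧ :=
  Nat.Partition.genFun fun i c => if ¬ Even i then z ^ c else 0

/-- The generating function of partitions into distinct parts, `z` marking the number of parts. -/
noncomputable def distinctGen (z : R) : R⟦X⟧ :=
  Nat.Partition.genFun fun _ c => if c < 2 then z ^ c else 0

theorem prod_ite_pow_count (z : R) (t : Multiset ℕ) (P : ℕ → ℕ → Prop) [∀ i c, Decidable (P i c)] :
    (Multiset.toFinsupp t).prod (fun i c => if P i c then z ^ c else 0) =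
      if ∀ i ∈ t, P i (t.count i) then z ^ Multiset.card t else 0 := by
  rw [Finsupp.prod, Multiset.toFinsupp_support]
  split_ifs with h
  · calc _ = ∏ i ∈ t.toFinset, z ^ t.count i :=
          prod_congr rfl fun i hi => if_pos (h i (Multiset.mem_toFinset.mp hi))
      _ = z ^ Multiset.card t := by rw [prod_pow_eq_pow_sum, Multiset.toFinset_sum_count_eq]
  · push Not at h
    obtain ⟨i, hi, hP⟩ := h
    exact prod_eq_zero (Multiset.mem_toFinset.mpr hi) (if_neg hP)

theorem coeff_oddGen (z : R) (n : ℕ) :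
    coeff n (oddGen z) = ∑ p ∈ Nat.Partition.odds n, z ^ Multiset.card p.parts := by
  rw [oddGen, Nat.Partition.coeff_genFun, Nat.Partition.odds, Nat.Partition.restricted, sum_filter]
  exact sum_congr rfl fun p _ => prod_ite_pow_count z p.parts fun i _ => ¬ Even i

theorem coeff_distinctGen (z : R) (n : ℕ) :
    coeff n (distinctGen z) = ∑ p ∈ Nat.Partition.distincts n, z ^ Multiset.card p.parts := by
  rw [distinctGen, Nat.Partition.coeff_genFun, ← Nat.Partition.countRestricted_two,
    Nat.Partition.countRestricted, sum_filter]
  exact sum_congr rfl fun p _ => prod_ite_pow_count z p.parts fun _ c => c < 2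

variable [TopologicalSpace R] [T2Space R] [IsTopologicalRing R]

theorem oddGen_mul_oddProd (z : R) : oddGen z * oddProd z = 1 := by
  have h1 := Nat.Partition.hasProd_genFun (R := R) (fun i c => if ¬ Even i then z ^ c else 0)
  have h2 : HasProd (fun i : ℕ => if Even i then (1 - C z * X ^ (i + 1) : R⟦X⟧) else 1)
      (oddProd z * 1) := by
    refine HasProd.even_mul_odd ?_ ?_
    · simpa using hasProd_oddProd z
    · simp
  have h3 := h1.mul h2
  rw [mul_one] at h3
  refine h3.unique (hasProd_one.congr_fun fun i => ?_)
  by_cases hi : Even i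
  · have h0 : constantCoeff (C z * X ^ (i + 1) : R⟦X⟧) = 0 := by simp
    have : ¬ Even (i + 1) := by grind
    have hgeom := tsum_pow_mul_one_sub_of_constantCoeff_eq_zero h0
    rw [(summable_pow_of_constantCoeff_eq_zero h0).tsum_eq_zero_add] at hgeom
    simp only [this, hi, not_false_eq_true, if_true]
    rw [← hgeom, pow_zero]
    congr 2
    refine tsum_congr fun j => ?_
    rw [smul_eq_C_mul, mul_pow, map_pow, pow_mul]
  · have : Even (i + 1) := by grind
    simp [this, hi]

/-- This is `(1 + z X^m) (1 - z X^m) = 1 - z² X^(2m)` multiplied over all `m ≥ 1`. -/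
theorem distinctGen_mul (z : R) :
    distinctGen z * (oddProd z * evenProd z) = evenProd (z ^ 2) := by
  have h1 := Nat.Partition.hasProd_genFun (R := R) (fun _ c => if c < 2 then z ^ c else 0)
  have h2 : HasProd (fun i : ℕ => (1 - C z * X ^ (i + 1) : R⟦X⟧)) (oddProd z * evenProd z) :=
    HasProd.even_mul_odd (by simpa using hasProd_oddProd z) (by simpa using hasProd_evenProd z)
  refine (h1.mul h2).unique ((hasProd_evenProd (z ^ 2)).congr_fun fun i => ?_)
  rw [tsum_eq_single 0]
  · simp [smul_eq_C_mul]
    ring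
  · intro j hj
    rw [if_neg (by omega), zero_smul]

/-- With `O_z`, `D_z` the generating functions and `P_z = 1 / O_z`, `E_z` the products over odd and
even exponents, the hypothesis lets `P_1` be exchanged for `P_z` in front of `O_z - D_z`, and
`P_z (O_z - D_z) E_z = E_z - E_{z²}` is even. Since `psi R * P_{-1} = E_1` is even too, multiplying
`psi R * (O_z - D_z)` by the even series `P_{-1} P_1 E_z` gives an even series. -/
theorem psi_mul_mem (z : R)
    (hz : (oddGen z - oddGen 1) * (oddGen z - distinctGen z) = 0) :
    psi R * (oddGen z - distinctGen z) ∈ evenSeries R := by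
  have hO := oddGen_mul_oddProd z
  have hO1 := oddGen_mul_oddProd (1 : R)
  have hD := distinctGen_mul z
  have hG := gauss (R := R)
  have hswap : oddProd 1 * (oddGen z - distinctGen z) =
      oddProd z * (oddGen z - distinctGen z) := by
    linear_combination (oddProd 1 * oddProd z) * hz -
      oddProd 1 * (oddGen z - distinctGen z) * hO +
      oddProd z * (oddGen z - distinctGen z) * hO1
  refine mem_of_mul_mem (g := oddProd (-1) * oddProd 1 * evenProd z)
    (mul_mem oddProd_mul_oddProd_mem (evenProd_mem z))
    (by simp [constantCoeff_oddProd, constantCoeff_evenProd]) ?_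
  have : psi R * (oddGen z - distinctGen z) * (oddProd (-1) * oddProd 1 * evenProd z) =
      evenProd 1 * (evenProd z - evenProd (z ^ 2)) := by
    linear_combination (evenProd z * oddProd 1 * (oddGen z - distinctGen z)) * hG +
      evenProd 1 * evenProd z * hswap + evenProd 1 * evenProd z * hO - evenProd 1 * hD
  rw [this]
  exact mul_mem (evenProd_mem 1) (sub_mem (evenProd_mem z) (evenProd_mem _))

end Partitions

/-! ### Extraction of the number of parts over the dual numbers -/

section Dual

open TrivSqZeroExt

/-- Two series with coefficients in the ideal `(ε)` have product zero, since `ε² = 0`. -/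
theorem mul_eq_zero_of_fst {f g : (DualNumber ℤ)⟦X⟧} (hf : ∀ n, fst (coeff n f) = 0)
    (hg : ∀ n, fst (coeff n g) = 0) : f * g = 0 := by
  ext1 n
  rw [coeff_mul, map_zero]
  refine sum_eq_zero fun p _ => ?_
  ext <;> simp [hf, hg]

/-- The part free of `ε` is Euler's theorem on odd and distinct partitions. -/
theorem fst_coeff_diff (n : ℕ) :
    fst (coeff n (oddGen (1 + DualNumber.eps : DualNumber ℤ) -
      distinctGen (1 + DualNumber.eps))) = 0 := by
  rw [map_sub, coeff_oddGen, coeff_distinctGen, fst_sub, fst_sum, fst_sum]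
  simp [Nat.Partition.card_odds_eq_card_distincts]

/-- The number of parts is extracted by `(1 + ε) ^ k = 1 + k ε`. -/
theorem snd_coeff_diff (n : ℕ) :
    snd (coeff n (oddGen (1 + DualNumber.eps : DualNumber ℤ) -
      distinctGen (1 + DualNumber.eps))) = b n := by
  rw [map_sub, coeff_oddGen, coeff_distinctGen, snd_sub, snd_sum, snd_sum]
  simp [b, oddPartsTotal, distinctPartsTotal]

theorem fst_coeff_oddGen (n : ℕ) :
    fst (coeff n (oddGen (1 + DualNumber.eps : DualNumber ℤ) - oddGen 1)) = 0 := by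
  rw [map_sub, coeff_oddGen, coeff_oddGen, fst_sub, fst_sum, fst_sum]
  simp

/-- The triangular number `j(j+1)/2` has the same parity as `⌈j/2⌉`. -/
theorem neg_one_pow_triangle (j : ℕ) :
    (-1 : ℤ) ^ (j * (j + 1) / 2) = (-1) ^ ((j + 1) / 2) := by
  obtain ⟨a, r, hr, rfl⟩ : ∃ a r, r < 4 ∧ j = 4 * a + r :=
    ⟨j / 4, j % 4, Nat.mod_lt _ (by norm_num), (Nat.div_add_mod j 4).symm⟩
  have h : (4 * a + r) * (4 * a + r + 1) / 2 =
      2 * (4 * a * a + 2 * a * r + a) + r * (r + 1) / 2 := by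
    rw [show (4 * a + r) * (4 * a + r + 1) =
      2 * (2 * (4 * a * a + 2 * a * r + a)) + r * (r + 1) by ring, Nat.mul_add_div (by norm_num)]
  have h' : (4 * a + r + 1) / 2 = 2 * a + (r + 1) / 2 := by omega
  rw [h, h', pow_add, pow_add, pow_mul, pow_mul]
  interval_cases r <;> simp

end Dual

end OddRecurrence

open OddRecurrence PowerSeries PowerSeries.WithPiTopology in
/-- For odd `n`, `∑_{j≥0} (-1)^{⌈j/2⌉} b(n - j(j+1)/2) = 0`. -/
theorem statement15 (n : ℕ) (hn : 0 < n) (hodd : Odd n) :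
    ∑ᶠ j : ℕ, (-1 : ℤ) ^ ((j + 1) / 2) * b ((n : ℤ) - j * (j + 1) / 2) = 0 := by
  set B : (DualNumber ℤ)⟦X⟧ := oddGen (1 + DualNumber.eps) - distinctGen (1 + DualNumber.eps)
    with hB
  have hmem : coeff n (psi (DualNumber ℤ) * B) = 0 :=
    psi_mul_mem (1 + DualNumber.eps : DualNumber ℤ)
      (mul_eq_zero_of_fst fst_coeff_oddGen fst_coeff_diff) n hodd
  have hterm : ∀ j : ℕ, TrivSqZeroExt.snd (coeff n ((-X) ^ (j * (j + 1) / 2) * B)) =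
      (-1 : ℤ) ^ ((j + 1) / 2) * b ((n : ℤ) - j * (j + 1) / 2) := by
    intro j
    have hcast : ((j : ℤ) * (j + 1) / 2) = ((j * (j + 1) / 2 : ℕ) : ℤ) := by push_cast; rfl
    rw [hcast, ← neg_one_pow_triangle]
    generalize j * (j + 1) / 2 = t
    rw [neg_pow, mul_assoc, show ((-1 : (DualNumber ℤ)⟦X⟧)) ^ t = C ((-1) ^ t) by simp,
      coeff_C_mul, coeff_X_pow_mul']
    split_ifs with ht
    · have hs := snd_coeff_diff (n - t)
      rw [← hB, Nat.cast_sub ht] at hs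
      rcases Nat.even_or_odd t with h | h <;> simp [h.neg_one_pow, hs]
    · rw [b, if_neg (by omega)]
      simp
  have hsum : HasSum (fun j : ℕ => (-1 : ℤ) ^ ((j + 1) / 2) * b ((n : ℤ) - j * (j + 1) / 2)) 0 := by
    have h1 := (hasSum_psi (R := DualNumber ℤ)).mul_right B
    have h2 := (hasSum_iff_hasSum_coeff (DualNumber ℤ)).mp h1 n
    have h3 := h2.map (TrivSqZeroExt.sndHom ℤ ℤ) TrivSqZeroExt.continuous_snd
    rw [hmem, map_zero] at h3
    exact h3.congr_fun fun j => (hterm j).symm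
  rw [← tsum_eq_finsum (L := SummationFilter.unconditional ℕ), hsum.tsum_eq]
  refine (Set.finite_Iic n).subset fun j hj => ?_
  by_contra hlt
  apply hj
  -- for `j > n` the argument of `b` is negative
  have : (n : ℤ) < j * (j + 1) / 2 := by
    rw [Set.mem_Iic, not_le] at hlt
    have : ((n : ℤ) + 1) ≤ j := by exact_mod_cast hlt
    refine Int.lt_of_lt_of_le (Int.lt_succ _) ((Int.le_ediv_iff_mul_le (by norm_num)).mpr ?_)
    nlinarith
  simp only [b]
  rw [if_neg (by omega), mul_zero]
end

section
/- For every positive integer n, Σ_{j=0}^{∞} ε_j · p(n − j(j+1)/2) equals Q_d(n/2) if n is even and equals 0 if n is odd, where ε_j = +1 if j ≡ 0 or 3 (mod 4) and ε_j = −1 if j ≡ 1 or 2 (mod 4) (equivalently ε_j = (−1)^{⌈j/2⌉}), p(m)=0 for m<0 and p(0)=1, and Q_d(m) denotes the number of partitions of m into distinct parts. -/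
/-!
The proof rests on Shanks's finite form of Gauss's theta identity,
`∑_{j < 2n} x^{j(j+1)/2} = ∑_{s < n} (P_n / P_s) x^{s(2n+1)}` with
`P_m = ∏_{1 ≤ r ≤ m} (1 - x^{2r}) / (1 - x^{2r-1})`, which follows by induction on `n` because the
change of the right-hand side telescopes. It is stated below with denominators cleared
(`shanks_identity`), in any commutative ring.

At `x = -X` in `ℤ⟦X⟧` the powers of `-1` are exactly the signs `(-1)^⌈j/2⌉`, and every term with
`s ≥ 1` is divisible by `X^{2n+1}`; so the partial theta series times `∏_{r<n} (1 + X^{2r+1})` is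
`∏_{r<n} (1 - X^{2r+2})` up to high order. Multiplying by `∏_{r<n} (1 + X^{2r+2})` and by the
partition series, and letting `n → ∞`, gives `D(X) W = D(X) E P D(X^2)`, where `D = ∏ (1 + X^i)`
generates partitions into distinct parts, `E = ∏ (1 - X^i)`, `P` generates all partitions, and the
coefficients of `W` are the sums to be evaluated. Since `E P = 1` and `D ≠ 0`, `W = D(X^2)`.
-/

open Nat Finset

/-- Shanks's finite form of Gauss's identity, with denominators cleared. -/
theorem shanks_identity {R : Type*} [CommRing R] (x : R) (n : ℕ) :
    (∏ r ∈ range n, (1 - x ^ (2 * r + 1))) * ∑ j ∈ range (2 * n), x ^ (j * (j + 1) / 2) =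
      ∑ s ∈ range n, (∏ r ∈ range s, (1 - x ^ (2 * r + 1))) *
        (∏ r ∈ Ico s n, (1 - x ^ (2 * r + 2))) * x ^ (s * (2 * n + 1)) := by
  induction n with
  | zero => simp
  | succ n ih =>
    set B : ℕ → R := fun s ↦ ∏ r ∈ range s, (1 - x ^ (2 * r + 1)) with hB
    have hBs (s : ℕ) : B (s + 1) = B s * (1 - x ^ (2 * s + 1)) := prod_range_succ _ _
    set A : ℕ → R := fun s ↦ ∏ r ∈ Ico s n, (1 - x ^ (2 * r + 2)) with hA
    have hAs (s : ℕ) (hs : s < n) : A s = (1 - x ^ (2 * s + 2)) * A (s + 1) :=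
      prod_eq_prod_Ico_succ_bot hs _
    have hAn : A n = 1 := by simp [hA]
    have hA' (s : ℕ) (hs : s ≤ n) :
        ∏ r ∈ Ico s (n + 1), (1 - x ^ (2 * r + 2)) = A s * (1 - x ^ (2 * n + 2)) :=
      prod_Ico_succ_top hs _
    -- Up to the factor `1 - x ^ (2 * n + 1)` gained on the left, the step from `n` to `n + 1` changes
    -- the summand of index `s` by `G (s + 1) - G s`.
    let G : ℕ → R := fun s ↦ (1 - x ^ (2 * s)) * B s * A s * x ^ (s * (2 * n + 1))
    have hG : ∑ s ∈ range n, (B s * (A s * (1 - x ^ (2 * n + 2))) * x ^ (s * (2 * (n + 1) + 1)) -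
        (1 - x ^ (2 * n + 1)) * (B s * A s * x ^ (s * (2 * n + 1)))) = G n := by
      have h0 : G n = G n - G 0 := by simp [G]
      rw [h0, ← sum_range_sub]
      refine sum_congr rfl fun s hs ↦ ?_
      simp only [G, hBs, hAs s (mem_range.1 hs)]
      ring
    simp only [G, hAn] at hG
    rw [sum_sub_distrib, ← mul_sum, ← ih] at hG
    have e1 : 2 * n * (2 * n + 1) / 2 = n * (2 * n + 1) := by
      rw [mul_assoc]; exact Nat.mul_div_cancel_left _ two_pos
    have e2 : (2 * n + 1) * (2 * n + 1 + 1) / 2 = (2 * n + 1) * (n + 1) := by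
      rw [show (2 * n + 1) * (2 * n + 1 + 1) = 2 * ((2 * n + 1) * (n + 1)) by ring]
      exact Nat.mul_div_cancel_left _ two_pos
    have hsum : ∑ s ∈ range n, B s * (∏ r ∈ Ico s (n + 1), (1 - x ^ (2 * r + 2))) *
        x ^ (s * (2 * (n + 1) + 1)) =
        ∑ s ∈ range n, B s * (A s * (1 - x ^ (2 * n + 2))) * x ^ (s * (2 * (n + 1) + 1)) :=
      sum_congr rfl fun s hs ↦ by rw [hA' s (mem_range.1 hs).le]
    change B (n + 1) * _ = ∑ s ∈ range (n + 1), B s * _ * _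
    rw [sum_range_succ _ n, hsum, sub_eq_iff_eq_add.1 hG, hA' n le_rfl, hAn, hBs,
      show range (2 * (n + 1)) = range (2 * n + 1 + 1) from rfl, sum_range_succ, sum_range_succ,
      e1, e2]
    change _ = _ + (1 - x ^ (2 * n + 1)) * (B n * _) + _
    ring

/-- The sign `(-1) ^ ⌈j / 2⌉` is the parity of the `j`-th triangular number. -/
theorem neg_pow_triangular {R : Type*} [CommRing R] (x : R) (j : ℕ) :
    (-x) ^ (j * (j + 1) / 2) = (-1) ^ ((j + 1) / 2) * x ^ (j * (j + 1) / 2) := by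
  rw [neg_pow]
  congr 1
  obtain ⟨k, rfl | rfl⟩ : ∃ k, j = 2 * k ∨ j = 2 * k + 1 := ⟨j / 2, by omega⟩
  · rw [mul_assoc, Nat.mul_div_cancel_left _ two_pos, show (2 * k + 1) / 2 = k by omega,
      show k * (2 * k + 1) = 2 * k ^ 2 + k by ring, pow_add, pow_mul]
    simp
  · rw [show (2 * k + 1) * (2 * k + 1 + 1) = 2 * (2 * (k * (k + 1)) + (k + 1)) by ring,
      Nat.mul_div_cancel_left _ two_pos, show (2 * k + 1 + 1) / 2 = k + 1 by omega,
      pow_add, pow_mul]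
    simp

open PowerSeries

/-- The signed sum of `X ^ (j * (j + 1) / 2)` over `j < 2 * n`: a partial sum of Gauss's theta
series at `-X`. -/
noncomputable def gaussPartial (n : ℕ) : ℤ⟦X⟧ :=
  ∑ j ∈ range (2 * n), (-1) ^ ((j + 1) / 2) * X ^ (j * (j + 1) / 2)

/-- The generating function of the partition function. -/
noncomputable def partitionSeries : ℤ⟦X⟧ := PowerSeries.mk fun n ↦ (pN n : ℤ)

/-- The generating function of the number of partitions into distinct parts. -/
noncomputable def distinctSeries : ℤ⟦X⟧ := PowerSeries.mk fun n ↦ (Qd n : ℤ)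

/-- The product of Gauss's theta series at `-X` with the generating function of the partition
function, given by its coefficients. -/
noncomputable def gaussSeries : ℤ⟦X⟧ := PowerSeries.mk fun n ↦
  ∑ᶠ j : ℕ, (-1 : ℤ) ^ ((j + 1) / 2) * pZ ((n : ℤ) - j * (j + 1) / 2)

theorem coeff_gaussSeries (n : ℕ) : coeff n gaussSeries =
    ∑ᶠ j : ℕ, (-1 : ℤ) ^ ((j + 1) / 2) * pZ ((n : ℤ) - j * (j + 1) / 2) := coeff_mk _ _

/-- Multiplying by the odd factors `1 + X ^ (2 * r + 1)` turns the partial theta series into the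
product of the `1 - X ^ (2 * r + 2)`, up to terms of order at least `n`. -/
theorem exists_prod_mul_gaussPartial (n : ℕ) : ∃ C : ℤ⟦X⟧,
    (∏ r ∈ range n, (1 + X ^ (2 * r + 1))) * gaussPartial n =
      (∏ r ∈ range n, (1 - X ^ (2 * r + 2))) + X ^ n * C := by
  have h := shanks_identity (-X : ℤ⟦X⟧) n
  have ho (r : ℕ) : (-X : ℤ⟦X⟧) ^ (2 * r + 1) = -X ^ (2 * r + 1) := Odd.neg_pow ⟨r, rfl⟩ _
  have he (r : ℕ) : (-X : ℤ⟦X⟧) ^ (2 * r + 2) = X ^ (2 * r + 2) :=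
    Even.neg_pow ⟨r + 1, by ring⟩ _
  simp only [neg_pow_triangular, ho, he, sub_neg_eq_add] at h
  rw [gaussPartial, h]
  rcases n with _ | n
  · exact ⟨-1, by simp⟩
  · rw [sum_range_succ']
    suffices hd : (X : ℤ⟦X⟧) ^ (n + 1) ∣ ∑ s ∈ range n,
        (∏ r ∈ range (s + 1), (1 + X ^ (2 * r + 1))) *
        (∏ r ∈ Ico (s + 1) (n + 1), (1 - X ^ (2 * r + 2))) *
          (-X) ^ ((s + 1) * (2 * (n + 1) + 1)) by
      obtain ⟨C, hC⟩ := hd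
      refine ⟨C, ?_⟩
      rw [hC]
      simp [add_comm]
    refine dvd_sum fun s _ ↦ Dvd.dvd.mul_left ?_ _
    rw [neg_pow]
    exact Dvd.dvd.mul_left (pow_dvd_pow _ (by nlinarith)) _

theorem prod_range_two_mul (n : ℕ) :
    ∏ i ∈ range (2 * n), (1 + X ^ (i + 1) : ℤ⟦X⟧) =
      (∏ r ∈ range n, (1 + X ^ (2 * r + 1))) * ∏ r ∈ range n, (1 + X ^ (2 * (r + 1))) := by
  induction n with
  | zero => simp
  | succ n ih =>
    rw [show 2 * (n + 1) = 2 * n + 1 + 1 by ring, prod_range_succ, prod_range_succ, ih,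
      prod_range_succ, prod_range_succ]
    ring

theorem coeff_gaussPartial_mul {d n : ℕ} (h : d < 2 * n) :
    coeff d (gaussPartial n * partitionSeries) = coeff d gaussSeries := by
  have hj (j : ℕ) : coeff d ((-1) ^ ((j + 1) / 2) * X ^ (j * (j + 1) / 2) * partitionSeries) =
      (-1 : ℤ) ^ ((j + 1) / 2) * pZ ((d : ℤ) - j * (j + 1) / 2) := by
    have hC : ((-1) ^ ((j + 1) / 2) : ℤ⟦X⟧) = C ((-1 : ℤ) ^ ((j + 1) / 2)) := by simp
    have hc : ((j : ℤ) * (j + 1) / 2) = ((j * (j + 1) / 2 : ℕ) : ℤ) := by push_cast; rfl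
    rw [hC, mul_assoc, coeff_C_mul, coeff_X_pow_mul', hc, pZ]
    congr 1
    by_cases hle : j * (j + 1) / 2 ≤ d
    · rw [if_pos hle, if_pos (by omega), partitionSeries, coeff_mk]
      congr 2
      omega
    · rw [if_neg hle, if_neg (by omega)]
  rw [coeff_gaussSeries, gaussPartial, sum_mul, map_sum, sum_congr rfl fun j _ ↦ hj j]
  refine (finsum_eq_sum_of_support_subset _ fun j hjs ↦ ?_).symm
  by_contra hlt
  have h1 : 2 * n ≤ j := by simpa using hlt
  -- The summand vanishes because its argument is negative: `j ≤ j * (j + 1) / 2`.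
  have h2 : j ≤ j * (j + 1) / 2 := by
    rw [Nat.le_div_iff_mul_le two_pos]
    nlinarith
  have hc : ((j : ℤ) * (j + 1) / 2) = ((j * (j + 1) / 2 : ℕ) : ℤ) := by push_cast; rfl
  refine hjs ?_
  beta_reduce
  rw [hc, pZ, if_neg (by omega), mul_zero]

open PowerSeries.WithPiTopology Filter Topology

section Limits

theorem hasProd_distinctSeries : HasProd (fun i ↦ (1 + X ^ (i + 1) : ℤ⟦X⟧)) distinctSeries := by
  have h := Nat.Partition.hasProd_powerSeriesMk_card_countRestricted ℤ (m := 2) (by norm_num)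
  simpa [sum_range_succ, distinctSeries, Qd, Nat.Partition.countRestricted_two] using h

theorem hasProd_expand_distinctSeries :
    HasProd (fun i ↦ (1 + X ^ (2 * (i + 1)) : ℤ⟦X⟧)) (expand 2 two_ne_zero distinctSeries) := by
  have hc : Continuous (expand 2 two_ne_zero : ℤ⟦X⟧ →ₐ[ℤ] ℤ⟦X⟧) := by
    rw [continuous_iff_continuousAt]
    intro f
    rw [ContinuousAt, tendsto_iff_coeff_tendsto]
    intro d
    simp only [coeff_expand]
    split_ifs
    · exact (continuous_coeff ℤ _).continuousAt
    · exact tendsto_const_nhds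
  have h := hasProd_distinctSeries.map (expand 2 two_ne_zero : ℤ⟦X⟧ →ₐ[ℤ] ℤ⟦X⟧) hc
  convert h using 2 with i
  simp [pow_mul]

theorem partitionSeries_mul_tprod :
    partitionSeries * ∏' i, (1 - X ^ (i + 1) : ℤ⟦X⟧) = 1 := by
  have h := Nat.Partition.hasProd_powerSeriesMk_card_restricted ℤ (fun _ ↦ True)
  have hP : (PowerSeries.mk fun n ↦ (#(Nat.Partition.restricted n fun _ ↦ True) : ℤ)) =
      partitionSeries := by
    ext n
    simp [partitionSeries, pN, Nat.Partition.restricted]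
  rw [hP] at h
  rw [← (h.mul (multipliable_one_sub_X_pow ℤ).hasProd).tprod_eq]
  convert tprod_one with i
  simp only [if_true, pow_mul]
  exact tsum_pow_mul_one_sub_of_constantCoeff_eq_zero (by simp)

theorem tendsto_gaussPartial_mul :
    Tendsto (fun n ↦ gaussPartial n * partitionSeries) atTop (𝓝 gaussSeries) := by
  rw [tendsto_iff_coeff_tendsto]
  intro d
  refine tendsto_nhds_of_eventually_eq ?_
  filter_upwards [eventually_gt_atTop d] with n hn
  exact coeff_gaussPartial_mul (by omega)

theorem tendsto_X_pow_mul (C : ℕ → ℤ⟦X⟧) : Tendsto (fun n ↦ X ^ n * C n) atTop (𝓝 0) := by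
  rw [tendsto_iff_coeff_tendsto]
  intro d
  refine tendsto_nhds_of_eventually_eq ?_
  filter_upwards [eventually_gt_atTop d] with n hn
  rw [coeff_X_pow_mul', if_neg (by omega), map_zero]

/-- Both sides become equal after multiplication by `∏ (1 + X ^ (i + 1))`, which can be cancelled. -/
theorem gaussSeries_eq_expand : gaussSeries = expand 2 two_ne_zero distinctSeries := by
  choose C hC using exists_prod_mul_gaussPartial
  have hD := hasProd_distinctSeries.tendsto_prod_nat
  have hD2 := hasProd_expand_distinctSeries.tendsto_prod_nat
  have hE := (multipliable_one_sub_X_pow ℤ).hasProd.tendsto_prod_nat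
  have h2 : Tendsto (fun n : ℕ ↦ 2 * n) atTop atTop := tendsto_id.const_mul_atTop' two_pos
  have hl := (hD.comp h2).mul tendsto_gaussPartial_mul
  have hr := (((hD.mul hE).add (tendsto_X_pow_mul C)).mul hD2).mul_const partitionSeries
  have hne : distinctSeries ≠ 0 := fun h ↦ by
    have := congrArg (coeff 0) h
    simp [distinctSeries, Qd, Nat.Partition.distincts] at this
  refine mul_left_cancel₀ hne ((tendsto_nhds_unique (hl.congr fun n ↦ ?_) hr).trans ?_)
  · have hA : ∏ r ∈ range n, (1 - X ^ (2 * r + 2) : ℤ⟦X⟧) =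
        (∏ i ∈ range n, (1 + X ^ (i + 1))) * ∏ i ∈ range n, (1 - X ^ (i + 1)) := by
      rw [← prod_mul_distrib]
      exact prod_congr rfl fun r _ ↦ by ring
    rw [← hA, ← hC, Function.comp_apply, prod_range_two_mul]
    ring
  · linear_combination (distinctSeries * expand 2 two_ne_zero distinctSeries) *
      partitionSeries_mul_tprod

end Limits

/-- `∑_{j≥0} (-1)^{⌈j/2⌉} p(n - j(j+1)/2)` equals `Q_d(n/2)` for even `n` and `0`
for odd `n`. -/
theorem statement16 (n : ℕ) (hn : 0 < n) :
    ∑ᶠ j : ℕ, (-1 : ℤ) ^ ((j + 1) / 2) * pZ ((n : ℤ) - j * (j + 1) / 2) =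
      if Even n then (Qd (n / 2) : ℤ) else 0 := by
  have h := congrArg (PowerSeries.coeff n) gaussSeries_eq_expand
  rw [coeff_gaussSeries, PowerSeries.coeff_expand] at h
  rw [h]
  simp [even_iff_two_dvd, distinctSeries]
end
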